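/- arXiv:2312.00711 — 4 statements merged into one kernel-verified Lean document; each statement's English description precedes it below -/
import Mathlib

section
/- There exists an infinitely differentiable function h_∞ : (0,∞) → (0,∞) with the following properties: h_∞ is totally monotone (i.e. (−1)ⁿ h_∞⁽ⁿ⁾(x) > 0 for every n ≥ 1 and x > 0); h_∞(x) → ∞ as x → 0⁺; h_∞(x) → 0 as x → ∞; and for every infinitely differentiable function h : [0,∞) → ℝ that satisfies h'' − 2h' = h² on [0,∞) and is not identically zero, there exists c > 0 such that h(x) = h_∞(x + c) for every x ≥ 0. -/
open Set Filter

/-!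
A solution on a half-line `(a, ∞)` is nonincreasing, nonnegative and tends to `0`: otherwise the
energy `h' ^ 2 / 2 - h ^ 3 / 3`, or the function `h' - 2 h` whose derivative is `h ^ 2`, grows so
fast that the solution explodes in finite time. If `h` and `k` are two solutions, then
`u = (h - k) ^ 2` satisfies `u'' ≥ 2 u'` and tends to `0`, so it is nonincreasing. Hence a solution
on `[a, ∞)` is determined by its value at `a`. The same convexity argument, applied inductively to
the differentiated equation, shows that a nonzero solution is totally monotone.

A nonzero solution on a half-line is found by integrating the equation from infinity. It cannot be
continued to the whole line, since in reversed time a positive solution explodes. Its maximal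
continuation therefore starts at a finite point, which a translation moves to `0`, and total
monotonicity bounds `h'` in terms of `h`, so that `h` itself must blow up there. The resulting
profile takes every positive value, and a nonzero solution on `[0, ∞)` is the translate that agrees
with it at `0`.
-/

open scoped Topology Manifold

section Growth

variable {u u' : ℝ → ℝ} {a c k r : ℝ}

lemma tendsto_atTop_of_le_hasDerivAt (hc : 0 < c) (hu : ∀ᶠ x in atTop, HasDerivAt u (u' x) x)
    (hle : ∀ᶠ x in atTop, c ≤ u' x) : Tendsto u atTop atTop := by
  obtain ⟨b, hb⟩ := eventually_atTop.1 (hu.and hle)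
  have hlin : Tendsto (fun x ↦ c * (x - b) + u b) atTop atTop :=
    tendsto_atTop_add_const_right _ _
      ((tendsto_atTop_add_const_right _ (-b) tendsto_id).const_mul_atTop hc)
  refine tendsto_atTop_mono' atTop ?_ hlin
  filter_upwards [eventually_ge_atTop b] with x hx
  have hmean := (convex_Ici b).mul_sub_le_image_sub_of_le_deriv
    (fun y hy ↦ (hb y hy).1.continuousAt.continuousWithinAt)
    (fun y hy ↦ (hb y (interior_subset hy)).1.differentiableAt.differentiableWithinAt)
    (fun y hy ↦ (hb y (interior_subset hy)).1.deriv ▸ (hb y (interior_subset hy)).2)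
    b self_mem_Ici x hx hx
  linarith

lemma not_eventually_mul_rpow_le_hasDerivAt (hr : 1 < r) (hc : 0 < c)
    (hu : ∀ᶠ x in atTop, HasDerivAt u (u' x) x) (hpos : ∀ᶠ x in atTop, 0 < u x) :
    ¬ ∀ᶠ x in atTop, c * u x ^ r ≤ u' x := by
  intro hle
  -- The derivative of `-u ^ (1 - r)` is bounded below, although this function is negative.
  have hderiv : ∀ᶠ x in atTop,
      HasDerivAt (fun x ↦ -u x ^ (1 - r)) ((r - 1) * (u' x * u x ^ (-r))) x := by
    filter_upwards [hu, hpos] with x hx hux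
    convert! (hx.rpow_const (p := 1 - r) (.inl hux.ne')).neg using 1
    rw [show 1 - r - 1 = -r by ring]
    ring
  have hbound : ∀ᶠ x in atTop, (r - 1) * c ≤ (r - 1) * (u' x * u x ^ (-r)) := by
    filter_upwards [hle, hpos] with x hx hux
    refine mul_le_mul_of_nonneg_left ?_ (sub_nonneg.2 hr.le)
    rwa [Real.rpow_neg hux.le, ← div_eq_mul_inv, le_div_iff₀ (by positivity)]
  have hlim := tendsto_atTop_of_le_hasDerivAt (mul_pos (sub_pos.2 hr) hc) hderiv hbound
  obtain ⟨x, hx, hux⟩ := ((hlim.eventually_ge_atTop 0).and hpos).exists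
  have := Real.rpow_pos_of_pos hux (1 - r)
  linarith

lemma not_eventually_mul_pow_three_le_sq_hasDerivAt (hc : 0 < c)
    (hu : ∀ᶠ x in atTop, HasDerivAt u (u' x) x) (hpos : ∀ᶠ x in atTop, 0 < u x)
    (hpos' : ∀ᶠ x in atTop, 0 < u' x) : ¬ ∀ᶠ x in atTop, c * u x ^ 3 ≤ u' x ^ 2 := by
  intro hle
  refine not_eventually_mul_rpow_le_hasDerivAt (r := 3 / 2) (by norm_num) (Real.sqrt_pos.2 hc)
    hu hpos ?_
  filter_upwards [hle, hpos, hpos'] with x hx hux hux'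
  refine le_of_sq_le_sq ?_ hux'.le
  rwa [mul_pow, Real.sq_sqrt hc.le, ← Real.rpow_mul_natCast hux.le,
    show (3 / 2 : ℝ) * (2 : ℕ) = (3 : ℕ) by norm_num, Real.rpow_natCast]

lemma monotoneOn_Ici_of_mul_le_hasDerivAt (hk : 0 ≤ k)
    (hu : ∀ x ∈ Ici a, HasDerivAt u (u' x) x) (hle : ∀ x ∈ Ici a, k * u x ≤ u' x)
    (ha : 0 ≤ u a) : MonotoneOn u (Ici a) := by
  have hcont : ContinuousOn u (Ici a) := fun x hx ↦ (hu x hx).continuousAt.continuousWithinAt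
  -- Multiplying by `exp (-k x)` turns the differential inequality into monotonicity.
  have hexp : MonotoneOn (fun x ↦ Real.exp (-(k * x)) * u x) (Ici a) := by
    refine monotoneOn_of_hasDerivWithinAt_nonneg (convex_Ici a)
      (f' := fun x ↦ Real.exp (-(k * x)) * (u' x - k * u x)) (by fun_prop) (fun x hx ↦ ?_)
      fun x hx ↦ mul_nonneg (Real.exp_pos _).le (sub_nonneg.2 (hle x (interior_subset hx)))
    convert! ((((hasDerivAt_id x).const_mul k).neg.exp).mul
      (hu x (interior_subset hx))).hasDerivWithinAt using 1
    simp only [id, Pi.neg_apply, mul_one]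
    ring
  have hnonneg : ∀ x ∈ Ici a, 0 ≤ u x := fun x hx ↦
    nonneg_of_mul_nonneg_right ((mul_nonneg (Real.exp_pos _).le ha).trans
      (hexp self_mem_Ici hx hx)) (Real.exp_pos _)
  exact monotoneOn_of_hasDerivWithinAt_nonneg (convex_Ici a) hcont
    (fun x hx ↦ (hu x (interior_subset hx)).hasDerivWithinAt)
    fun x hx ↦ (mul_nonneg hk (hnonneg x (interior_subset hx))).trans (hle x (interior_subset hx))

variable {u'' : ℝ → ℝ}

lemma hasDerivAt_nonpos_of_not_tendsto_atTop (hk : 0 ≤ k)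
    (hu : ∀ x ∈ Ioi a, HasDerivAt u (u' x) x) (hu' : ∀ x ∈ Ioi a, HasDerivAt u' (u'' x) x)
    (hle : ∀ x ∈ Ioi a, k * u' x ≤ u'' x) (hlim : ¬ Tendsto u atTop atTop) :
    ∀ x ∈ Ioi a, u' x ≤ 0 := by
  intro x hx
  by_contra! hpos
  have hsub : Ici x ⊆ Ioi a := Ici_subset_Ioi.2 hx
  have hmono := monotoneOn_Ici_of_mul_le_hasDerivAt hk (fun y hy ↦ hu' y (hsub hy))
    (fun y hy ↦ hle y (hsub hy)) hpos.le
  refine hlim (tendsto_atTop_of_le_hasDerivAt hpos ((eventually_gt_atTop a).mono hu) ?_)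
  filter_upwards [eventually_ge_atTop x] with y hy using hmono self_mem_Ici hy hy

lemma hasDerivAt_neg_of_not_tendsto_atTop (hk : 0 ≤ k)
    (hu : ∀ x ∈ Ioi a, HasDerivAt u (u' x) x) (hu' : ∀ x ∈ Ioi a, HasDerivAt u' (u'' x) x)
    (hlt : ∀ x ∈ Ioi a, k * u' x < u'' x) (hlim : ¬ Tendsto u atTop atTop) :
    ∀ x ∈ Ioi a, u' x < 0 := by
  have hnonpos := hasDerivAt_nonpos_of_not_tendsto_atTop hk hu hu' (fun x hx ↦ (hlt x hx).le) hlim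
  intro x hx
  refine (hnonpos x hx).lt_of_ne fun h0 ↦ ?_
  have hmax : IsLocalMax u' x := by
    filter_upwards [Ioi_mem_nhds hx] with y hy using h0 ▸ hnonpos y hy
  have := hlt x hx
  rw [h0, hmax.hasDerivAt_eq_zero (hu' x hx)] at this
  simp at this

lemma eventually_mul_pow_three_le_sq_of_hasDerivAt {p : ℝ → ℝ} (hu : ∀ t, HasDerivAt u (p t) t)
    (hp : ∀ t, HasDerivAt p (u t ^ 2 - 2 * p t) t) (hpos : ∀ t, 0 ≤ u t)
    (hp' : ∀ t, 0 ≤ u t ^ 2 - 2 * p t) (hlim : Tendsto u atTop atTop) :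
    ∀ᶠ t in atTop, 1 / 9 * u t ^ 3 ≤ p t ^ 2 := by
  -- The energy `p ^ 2 / 2 - u ^ 3 / 3` is corrected by `2 p u` so as to increase.
  have henergy : Monotone fun t ↦ p t ^ 2 / 2 + 2 * p t * u t - u t ^ 3 / 3 := by
    refine monotone_of_hasDerivAt_nonneg (f' := fun t ↦ 2 * (u t ^ 2 - 2 * p t) * u t)
      (fun t ↦ ?_) fun t ↦ mul_nonneg (mul_nonneg zero_le_two (hp' t)) (hpos t)
    convert! ((((hp t).pow 2).div_const 2).add (((hp t).const_mul 2).mul (hu t))).sub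
      (((hu t).pow 3).div_const 3) using 1
    push_cast
    ring
  set e := p 0 ^ 2 / 2 + 2 * p 0 * u 0 - u 0 ^ 3 / 3
  filter_upwards [eventually_ge_atTop 0, hlim.eventually_ge_atTop 12,
    hlim.eventually_ge_atTop (-e)] with t ht hut hute
  have hmono : e ≤ p t ^ 2 / 2 + 2 * p t * u t - u t ^ 3 / 3 := henergy ht
  have hcube : 12 * u t ^ 2 ≤ u t ^ 3 := by nlinarith [sq_nonneg (u t)]
  nlinarith [sq_nonneg (p t - u t)]

end Growth

section IntegralCurves

variable {E : Type*} [NormedAddCommGroup E] [NormedSpace ℝ E]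

lemma isIntegralCurveOn_iff_isMIntegralCurveOn {F : E → E} {γ : ℝ → E} {s : Set ℝ} :
    IsIntegralCurveOn γ (fun _ ↦ F) s ↔ IsMIntegralCurveOn (I := 𝓘(ℝ, E)) γ F s := by
  refine forall₂_congr fun t _ ↦ Iff.trans ?_ hasMFDerivWithinAt_iff_hasFDerivWithinAt.symm
  rw [hasDerivWithinAt_iff_hasFDerivWithinAt]
  rfl

lemma exists_isIntegralCurveOn_iUnion {ι : Type*} {v : ℝ → E → E} {γ : ι → ℝ → E}
    {s : ι → Set ℝ} (hs : ∀ i, IsOpen (s i)) (hγ : ∀ i, IsIntegralCurveOn (γ i) v (s i))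
    (hγγ : ∀ i j, EqOn (γ i) (γ j) (s i ∩ s j)) :
    ∃ Γ, IsIntegralCurveOn Γ v (⋃ i, s i) ∧ ∀ i, EqOn Γ (γ i) (s i) := by
  classical
  let Γ t := if ht : ∃ i, t ∈ s i then γ ht.choose t else 0
  have hΓ i : EqOn Γ (γ i) (s i) := fun t hti ↦ by
    have ht : ∃ i, t ∈ s i := ⟨i, hti⟩
    simpa only [Γ, dif_pos ht] using hγγ _ i ⟨ht.choose_spec, hti⟩
  refine ⟨Γ, fun t ht ↦ ?_, hΓ⟩
  obtain ⟨i, hti⟩ := mem_iUnion.1 ht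
  have hmem := (hs i).mem_nhds hti
  have hderiv := ((hγ i).isIntegralCurveAt hmem).hasDerivAt
  rw [← hΓ i hti] at hderiv
  exact (hderiv.congr_of_eventuallyEq ((hΓ i).eventuallyEq_of_mem hmem)).hasDerivWithinAt

lemma exists_isIntegralCurveOn_union {v : ℝ → E → E} {γ γ' : ℝ → E} {s s' : Set ℝ}
    (hs : IsOpen s) (hs' : IsOpen s') (hγ : IsIntegralCurveOn γ v s)
    (hγ' : IsIntegralCurveOn γ' v s') (h : EqOn γ γ' (s ∩ s')) :
    ∃ Γ, IsIntegralCurveOn Γ v (s ∪ s') ∧ EqOn Γ γ s := by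
  have h' : EqOn γ' γ (s' ∩ s) := inter_comm s s' ▸ h.symm
  obtain ⟨Γ, hΓ, hΓeq⟩ := exists_isIntegralCurveOn_iUnion (γ := fun i : Bool ↦ cond i γ γ')
    (s := fun i ↦ cond i s s') (Bool.forall_bool.2 ⟨hs', hs⟩) (Bool.forall_bool.2 ⟨hγ', hγ⟩)
    (by rintro (_ | _) (_ | _) <;> first | exact fun _ _ ↦ rfl | assumption)
  exact ⟨Γ, union_eq_iUnion ▸ hΓ, hΓeq true⟩

variable {F : E → E} {γ γ' : ℝ → E} {a b m t₀ : ℝ}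

lemma eqOn_Ioo_of_isIntegralCurveOn (hF : ContDiff ℝ 1 F)
    (hγ : IsIntegralCurveOn γ (fun _ ↦ F) (Ioo a b))
    (hγ' : IsIntegralCurveOn γ' (fun _ ↦ F) (Ioo a b))
    (ht₀ : t₀ ∈ Ioo a b) (h : γ t₀ = γ' t₀) : EqOn γ γ' (Ioo a b) :=
  isMIntegralCurveOn_Ioo_eqOn_of_contMDiff_boundaryless ht₀ (I := 𝓘(ℝ, E))
    (contMDiff_vectorSpace_iff_contDiff.2 hF) (isIntegralCurveOn_iff_isMIntegralCurveOn.1 hγ)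
    (isIntegralCurveOn_iff_isMIntegralCurveOn.1 hγ') h

lemma eqOn_Ioi_of_isIntegralCurveOn (hF : ContDiff ℝ 1 F)
    (hγ : IsIntegralCurveOn γ (fun _ ↦ F) (Ioi a))
    (hγ' : IsIntegralCurveOn γ' (fun _ ↦ F) (Ioi a))
    (ht₀ : a < t₀) (h : γ t₀ = γ' t₀) : EqOn γ γ' (Ioi a) := by
  intro t ht
  obtain ⟨b, hb⟩ := exists_gt (max t t₀)
  exact eqOn_Ioo_of_isIntegralCurveOn hF (hγ.mono Ioo_subset_Ioi_self)
    (hγ'.mono Ioo_subset_Ioi_self) ⟨ht₀, (le_max_right _ _).trans_lt hb⟩ h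
    ⟨ht, (le_max_left _ _).trans_lt hb⟩

variable [CompleteSpace E]

lemma exists_isIntegralCurveOn_Ioi_of_frequently_mem_isCompact (hF : ContDiff ℝ 1 F)
    (hγ : IsIntegralCurveOn γ (fun _ ↦ F) (Ioi m)) {K : Set E} (hK : IsCompact K)
    (hγK : ∃ᶠ t in 𝓝[>] m, γ t ∈ K) :
    ∃ m' < m, ∃ γ', IsIntegralCurveOn γ' (fun _ ↦ F) (Ioi m') ∧ EqOn γ' γ (Ioi m) := by
  obtain ⟨z, -, hz⟩ := hK.exists_mapClusterPt_of_frequently hγK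
  obtain ⟨r, hr, ε, hε, hflow⟩ :=
    hF.contDiffAt (x := z) |>.exists_forall_mem_closedBall_exists_eq_forall_mem_Ioo_hasDerivAt 0
  obtain ⟨t₁, ht₁, ht₁m⟩ := ((hz.frequently (Metric.closedBall_mem_nhds z hr)).and_eventually
    (Ioo_mem_nhdsGT (lt_add_of_pos_right m hε))).exists
  obtain ⟨α, hα₀, hα⟩ := hflow (γ t₁) ht₁
  have hβ : IsIntegralCurveOn (fun t ↦ α (t - t₁)) (fun _ ↦ F) (Ioo (t₁ - ε) (t₁ + ε)) :=
    fun t ht ↦ ((hα (t - t₁) ⟨by linarith [ht.1], by linarith [ht.2]⟩).comp_sub_const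
      t t₁).hasDerivWithinAt
  have hγβ : EqOn γ (fun t ↦ α (t - t₁)) (Ioo m (t₁ + ε)) :=
    eqOn_Ioo_of_isIntegralCurveOn hF (hγ.mono Ioo_subset_Ioi_self)
      (hβ.mono (Ioo_subset_Ioo_left (by linarith [ht₁m.2]))) ⟨ht₁m.1, by linarith⟩ (by simp [hα₀])
  have hmε : t₁ - ε < m := by linarith [ht₁m.2]
  obtain ⟨Γ, hΓ, hΓeq⟩ := exists_isIntegralCurveOn_union isOpen_Ioi isOpen_Ioo hγ hβ
    fun t ht ↦ hγβ ⟨ht.1, ht.2.2⟩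
  refine ⟨t₁ - ε, hmε, Γ, hΓ.mono fun t ht ↦ ?_, hΓeq⟩
  rcases lt_or_ge t (t₁ + ε) with h | h
  · exact .inr ⟨ht, h⟩
  · exact .inl (show m < t by linarith [ht₁m.1])

lemma exists_maximal_backward_extension (hF : ContDiff ℝ 1 F)
    (hγ : IsIntegralCurveOn γ (fun _ ↦ F) (Ioi a)) :
    ∃ Γ, EqOn Γ γ (Ioi a) ∧ (IsIntegralCurve Γ (fun _ ↦ F) ∨
      ∃ m ≤ a, IsIntegralCurveOn Γ (fun _ ↦ F) (Ioi m) ∧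
        ∀ K, IsCompact K → ∀ᶠ t in 𝓝[>] m, Γ t ∉ K) := by
  let S : Set ℝ := {b | b ≤ a ∧ ∃ γ', IsIntegralCurveOn γ' (fun _ ↦ F) (Ioi b) ∧ EqOn γ' γ (Ioi a)}
  have haS : a ∈ S := ⟨le_rfl, γ, hγ, fun _ _ ↦ rfl⟩
  choose γ' hγ' hγ'γ using fun b : S ↦ b.2.2
  obtain ⟨Γ, hΓ, hΓγ'⟩ : ∃ Γ, IsIntegralCurveOn Γ (fun _ ↦ F) (⋃ b : S, Ioi b.1) ∧
      ∀ b : S, EqOn Γ (γ' b) (Ioi b.1) := by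
    refine exists_isIntegralCurveOn_iUnion (fun _ ↦ isOpen_Ioi) hγ' fun b c ↦ ?_
    rw [Ioi_inter_Ioi]
    have hat : a < a + 1 := lt_add_one a
    exact eqOn_Ioi_of_isIntegralCurveOn hF ((hγ' b).mono (Ioi_subset_Ioi le_sup_left))
      ((hγ' c).mono (Ioi_subset_Ioi le_sup_right)) ((sup_le b.2.1 c.2.1).trans_lt hat)
      ((hγ'γ b hat).trans (hγ'γ c hat).symm)
  have hΓγ : EqOn Γ γ (Ioi a) := (hΓγ' ⟨a, haS⟩).trans (hγ'γ ⟨a, haS⟩)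
  refine ⟨Γ, hΓγ, ?_⟩
  by_cases hS : BddBelow S
  · have hΓm : IsIntegralCurveOn Γ (fun _ ↦ F) (Ioi (sInf S)) := hΓ.mono fun t ht ↦ by
      obtain ⟨b, hb, hbt⟩ := exists_lt_of_csInf_lt ⟨a, haS⟩ ht
      exact mem_iUnion.2 ⟨⟨b, hb⟩, hbt⟩
    have hma := csInf_le hS haS
    refine .inr ⟨sInf S, hma, hΓm, fun K hK ↦ ?_⟩
    by_contra hfreq
    obtain ⟨m', hm', Δ, hΔ, hΔΓ⟩ := exists_isIntegralCurveOn_Ioi_of_frequently_mem_isCompact hF hΓm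
      hK (by simpa only [Filter.Frequently] using hfreq)
    exact hm'.not_ge (csInf_le hS ⟨hm'.le.trans hma, Δ, hΔ,
      (hΔΓ.mono (Ioi_subset_Ioi hma)).trans hΓγ⟩)
  · left
    rw [← isIntegralCurveOn_univ]
    refine hΓ.mono fun t _ ↦ ?_
    obtain ⟨b, hb, hbt⟩ := not_bddBelow_iff.1 hS t
    exact mem_iUnion.2 ⟨⟨b, hb⟩, hbt⟩

end IntegralCurves

section LyapunovPerron

open MeasureTheory

/-- The solution `V` of `V' = 2 V - f` that does not grow like `exp (2 y)`: it is obtained by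
integrating the equation from infinity. -/
noncomputable def expTail (f : ℝ → ℝ) (y : ℝ) : ℝ :=
  Real.exp (2 * y) * ∫ t in Ioi y, Real.exp (-2 * t) * f t

variable {f g : ℝ → ℝ} {C D : ℝ}

lemma abs_exp_mul_le (hf : ∀ t, |f t| ≤ C * Real.exp |t|) {y t : ℝ} (hyt : y ≤ t) :
    |Real.exp (-2 * t) * f t| ≤ C * Real.exp (|y| - y) * Real.exp (-t) := by
  have hC : 0 ≤ C := by simpa using (abs_nonneg _).trans (hf 0)
  have ht : |t| ≤ |y| + (t - y) := by
    simpa [abs_of_nonneg (sub_nonneg.2 hyt)] using abs_add_le y (t - y)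
  calc |Real.exp (-2 * t) * f t| = Real.exp (-2 * t) * |f t| := by
        rw [abs_mul, Real.abs_exp]
    _ ≤ Real.exp (-2 * t) * (C * Real.exp (|y| + (t - y))) := by
        gcongr
        exact (hf t).trans (by gcongr)
    _ = C * Real.exp (|y| - y) * Real.exp (-t) := by
        rw [mul_left_comm, mul_assoc, ← Real.exp_add, ← Real.exp_add]
        ring_nf

lemma integrableOn_exp_mul (hf : Continuous f) (hfC : ∀ t, |f t| ≤ C * Real.exp |t|) (y : ℝ) :
    IntegrableOn (fun t ↦ Real.exp (-2 * t) * f t) (Ioi y) :=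
  ((integrableOn_exp_neg_Ioi y).const_mul _).mono' (by fun_prop)
    ((ae_restrict_mem measurableSet_Ioi).mono fun _ ht ↦ abs_exp_mul_le hfC (le_of_lt ht))

lemma abs_expTail_le (hf : ∀ t, |f t| ≤ C * Real.exp |t|) (y : ℝ) :
    |expTail f y| ≤ C * Real.exp |y| := by
  have hintegral : ‖∫ t in Ioi y, Real.exp (-2 * t) * f t‖ ≤
      ∫ t in Ioi y, C * Real.exp (|y| - y) * Real.exp (-t) :=
    norm_integral_le_of_norm_le ((integrableOn_exp_neg_Ioi y).const_mul _)
      ((ae_restrict_mem measurableSet_Ioi).mono fun _ ht ↦ abs_exp_mul_le hf (le_of_lt ht))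
  rw [integral_const_mul, integral_exp_neg_Ioi, Real.norm_eq_abs] at hintegral
  calc |expTail f y| = Real.exp (2 * y) * |∫ t in Ioi y, Real.exp (-2 * t) * f t| := by
        rw [expTail, abs_mul, Real.abs_exp]
    _ ≤ Real.exp (2 * y) * (C * Real.exp (|y| - y) * Real.exp (-y)) := by gcongr
    _ = C * Real.exp |y| := by
        rw [mul_assoc C, ← Real.exp_add, mul_left_comm, ← Real.exp_add]
        ring_nf

lemma expTail_nonneg (hf : ∀ t, 0 ≤ f t) (y : ℝ) : 0 ≤ expTail f y :=
  mul_nonneg (Real.exp_pos _).le (integral_nonneg fun t ↦ mul_nonneg (Real.exp_pos _).le (hf t))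

lemma expTail_eq_zero {y : ℝ} (hf : ∀ t ∈ Ioi y, f t = 0) : expTail f y = 0 := by
  rw [expTail, setIntegral_eq_zero_of_forall_eq_zero fun t ht ↦ by rw [hf t ht, mul_zero], mul_zero]

lemma hasDerivAt_expTail (hf : Continuous f) (hfC : ∀ t, |f t| ≤ C * Real.exp |t|) (y : ℝ) :
    HasDerivAt (expTail f) (2 * expTail f y - f y) y := by
  have hintegral (z : ℝ) : ∫ t in Ioi z, Real.exp (-2 * t) * f t =
      (∫ t in Ioi 0, Real.exp (-2 * t) * f t) - ∫ t in (0 : ℝ)..z, Real.exp (-2 * t) * f t := by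
    rw [← intervalIntegral.integral_interval_add_Ioi (integrableOn_exp_mul hf hfC 0)
      (integrableOn_exp_mul hf hfC z)]
    ring
  have hcont : Continuous fun t ↦ Real.exp (-2 * t) * f t := by fun_prop
  have hderiv : HasDerivAt (fun z ↦ ∫ t in Ioi z, Real.exp (-2 * t) * f t)
      (-(Real.exp (-2 * y) * f y)) y := by
    rw [funext hintegral]
    exact (hcont.integral_hasStrictDerivAt 0 y).hasDerivAt.const_sub _
  convert! (((hasDerivAt_id y).const_mul 2).exp).mul hderiv using 1
  have hexp : Real.exp (2 * y) * Real.exp (-2 * y) = 1 := by simp [← Real.exp_add]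
  simp only [expTail, id]
  linear_combination f y * hexp

lemma continuous_expTail (hf : Continuous f) (hfC : ∀ t, |f t| ≤ C * Real.exp |t|) :
    Continuous (expTail f) :=
  continuous_iff_continuousAt.2 fun y ↦ (hasDerivAt_expTail hf hfC y).continuousAt

lemma expTail_sub (hf : Continuous f) (hfC : ∀ t, |f t| ≤ C * Real.exp |t|) (hg : Continuous g)
    (hgD : ∀ t, |g t| ≤ D * Real.exp |t|) (y : ℝ) :
    expTail (fun t ↦ f t - g t) y = expTail f y - expTail g y := by
  simp only [expTail, mul_sub]
  rw [integral_sub (integrableOn_exp_mul hf hfC y) (integrableOn_exp_mul hg hgD y), mul_sub]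

lemma abs_integral_exp_abs_le (x : ℝ) : |∫ y in (0 : ℝ)..x, Real.exp (|y|)| ≤ Real.exp |x| := by
  wlog hx : 0 ≤ x generalizing x
  · have hneg := intervalIntegral.integral_comp_neg (a := 0) (b := -x) fun y ↦ Real.exp |y|
    simp only [abs_neg, neg_neg, neg_zero] at hneg
    rw [intervalIntegral.integral_symm, ← hneg, abs_neg, ← abs_neg x]
    exact this (-x) (by linarith)
  have hintegral : ∫ y in (0 : ℝ)..x, Real.exp |y| = Real.exp x - 1 := by
    rw [← Real.exp_zero, ← integral_exp]
    refine intervalIntegral.integral_congr fun y hy ↦ ?_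
    rw [uIcc_of_le hx] at hy
    simp only [abs_of_nonneg hy.1]
  rw [hintegral, abs_of_nonneg hx, abs_of_nonneg (by linarith [Real.one_le_exp hx])]
  linarith

lemma abs_integral_expTail_le (hf : ∀ t, |f t| ≤ C * Real.exp |t|) (x : ℝ) :
    |∫ y in (0 : ℝ)..x, expTail f y| ≤ C * Real.exp |x| := by
  have hC : 0 ≤ C := by simpa using (abs_nonneg _).trans (hf 0)
  have hle : ‖∫ y in (0 : ℝ)..x, expTail f y‖ ≤ |∫ y in (0 : ℝ)..x, C * Real.exp (|y|)| :=
    intervalIntegral.norm_integral_le_abs_of_norm_le (.of_forall (abs_expTail_le hf))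
      (Continuous.intervalIntegrable (by fun_prop) _ _)
  rw [intervalIntegral.integral_const_mul, abs_mul, abs_of_nonneg hC] at hle
  exact hle.trans (by gcongr; exact abs_integral_exp_abs_le x)

lemma abs_integral_expTail_sub_le (hf : Continuous f) (hfC : ∀ t, |f t| ≤ C * Real.exp |t|)
    (hg : Continuous g) (hgD : ∀ t, |g t| ≤ D * Real.exp |t|) {B : ℝ}
    (hfg : ∀ t, |f t - g t| ≤ B * Real.exp |t|) (x : ℝ) :
    |(∫ y in (0 : ℝ)..x, expTail f y) - ∫ y in (0 : ℝ)..x, expTail g y| ≤ B * Real.exp |x| := by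
  rw [← intervalIntegral.integral_sub ((continuous_expTail hf hfC).intervalIntegrable _ _)
    ((continuous_expTail hg hgD).intervalIntegrable _ _)]
  simp_rw [← expTail_sub hf hfC hg hgD]
  exact abs_integral_expTail_le hfg x

open NNReal BoundedContinuousFunction

variable {φ : ℝ → ℝ} {K : ℝ≥0}

lemma abs_comp_exp_mul_sub_le (hφ : LipschitzWith K φ) (g k : ℝ →ᵇ ℝ) (t : ℝ) :
    |φ (Real.exp |t| * g t) - φ (Real.exp |t| * k t)| ≤ K * dist g k * Real.exp |t| := by
  calc |φ (Real.exp |t| * g t) - φ (Real.exp |t| * k t)|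
      ≤ K * |Real.exp |t| * g t - Real.exp |t| * k t| := hφ.dist_le_mul _ _
    _ = K * dist (g t) (k t) * Real.exp |t| := by
        rw [← mul_sub, abs_mul, Real.abs_exp, Real.dist_eq]
        ring
    _ ≤ K * dist g k * Real.exp |t| := by
        gcongr
        exact dist_coe_le_dist t

lemma abs_comp_exp_mul_le (hφ : LipschitzWith K φ) (g : ℝ →ᵇ ℝ) (t : ℝ) :
    |φ (Real.exp |t| * g t)| ≤ (|φ 0| + K * ‖g‖) * Real.exp |t| := by
  have hle : |φ (Real.exp |t| * g t) - φ 0| ≤ K * ‖g‖ * Real.exp |t| := by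
    simpa using abs_comp_exp_mul_sub_le hφ g 0 t
  have habs := abs_sub_abs_le_abs_sub (φ (Real.exp |t| * g t)) (φ 0)
  nlinarith [Real.one_le_exp (abs_nonneg t), abs_nonneg (φ 0)]

lemma exists_eq_sub_integral_expTail (hφ : LipschitzWith K φ) (hK : K < 1) (A : ℝ) :
    ∃ (h : ℝ → ℝ) (C : ℝ), Continuous h ∧ (∀ t, |φ (h t)| ≤ C * Real.exp |t|) ∧
      ∀ x, h x = A - ∫ y in (0 : ℝ)..x, expTail (fun t ↦ φ (h t)) y := by
  -- Functions `exp |t| * g t` with `g` bounded form the weighted space of the contraction.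
  have hcont (g : ℝ →ᵇ ℝ) : Continuous fun t ↦ φ (Real.exp |t| * g t) := by
    have := hφ.continuous
    fun_prop
  have hbound := abs_comp_exp_mul_le hφ
  let J (g : ℝ →ᵇ ℝ) (x : ℝ) : ℝ := ∫ y in (0 : ℝ)..x, expTail (fun t ↦ φ (Real.exp |t| * g t)) y
  have hJ (g : ℝ →ᵇ ℝ) : Continuous fun x ↦ Real.exp (-|x|) * (A - J g x) := by
    have := intervalIntegral.continuous_primitive (μ := volume) (fun a b ↦
      (continuous_expTail (hcont g) (hbound g)).intervalIntegrable a b) 0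
    fun_prop
  have hJ_le (g : ℝ →ᵇ ℝ) (x : ℝ) :
      ‖Real.exp (-|x|) * (A - J g x)‖ ≤ |A| + (|φ 0| + K * ‖g‖) := by
    rw [norm_mul, Real.norm_of_nonneg (Real.exp_pos _).le, Real.exp_neg,
      inv_mul_le_iff₀ (Real.exp_pos _)]
    have := abs_integral_expTail_le (hbound g) x
    have := norm_sub_le A (J g x)
    simp only [Real.norm_eq_abs] at *
    nlinarith [Real.one_le_exp (abs_nonneg x), abs_nonneg A]
  let T (g : ℝ →ᵇ ℝ) : ℝ →ᵇ ℝ := ofNormedAddCommGroup _ (hJ g) _ (hJ_le g)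
  have hT : ContractingWith K T := by
    refine ⟨hK, .of_dist_le_mul fun g k ↦ (dist_le (by positivity)).2 fun x ↦ ?_⟩
    have hle := abs_integral_expTail_sub_le (hcont g) (hbound g) (hcont k) (hbound k)
      (abs_comp_exp_mul_sub_le hφ g k) x
    simp only [T, coe_ofNormedAddCommGroup, Real.dist_eq]
    rw [← mul_sub, abs_mul, Real.abs_exp, Real.exp_neg, inv_mul_le_iff₀ (Real.exp_pos _),
      sub_sub_sub_cancel_left, abs_sub_comm, mul_comm]
    exact hle
  obtain ⟨g, hg⟩ : ∃ g, T g = g := ⟨_, hT.fixedPoint_isFixedPt⟩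
  refine ⟨fun t ↦ Real.exp |t| * g t, _, by fun_prop, hbound g, fun x ↦ ?_⟩
  have hgx : Real.exp (-|x|) * (A - J g x) = g x := DFunLike.congr_fun hg x
  beta_reduce
  rw [← hgx, ← mul_assoc, ← Real.exp_add, add_neg_cancel, Real.exp_zero, one_mul]

lemma exists_hasDerivAt_neg_expTail (hφ : LipschitzWith K φ) (hK : K < 1) (A : ℝ) :
    ∃ h : ℝ → ℝ, h 0 = A ∧ (∀ x, HasDerivAt h (-expTail (fun t ↦ φ (h t)) x) x) ∧
      ∀ x, HasDerivAt (expTail fun t ↦ φ (h t)) (2 * expTail (fun t ↦ φ (h t)) x - φ (h x)) x := by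
  obtain ⟨h, C, hcont, hbound, hfix⟩ := exists_eq_sub_integral_expTail hφ hK A
  have hφh : Continuous fun t ↦ φ (h t) := hφ.continuous.comp hcont
  refine ⟨h, by simp [hfix 0], fun x ↦ ?_, hasDerivAt_expTail hφh hbound⟩
  refine HasDerivAt.congr_of_eventuallyEq ?_ (.of_forall hfix)
  exact ((continuous_expTail hφh hbound).integral_hasStrictDerivAt 0 x).hasDerivAt.const_sub _

variable {h : ℝ → ℝ}

lemma antitone_of_hasDerivAt_neg_expTail (hh : ∀ x, HasDerivAt h (-expTail f x) x)
    (hf : ∀ t, 0 ≤ f t) : Antitone h :=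
  antitone_of_hasDerivAt_nonpos hh fun x ↦ neg_nonpos.2 (expTail_nonneg hf x)

lemma nonneg_of_hasDerivAt_neg_expTail (hh : ∀ x, HasDerivAt h (-expTail f x) x)
    (hf : ∀ t, 0 ≤ f t) (hfh : ∀ t, h t ≤ 0 → f t = 0) {a : ℝ} (ha : 0 ≤ h a) :
    ∀ x ∈ Ici a, 0 ≤ h x := by
  have hanti := antitone_of_hasDerivAt_neg_expTail hh hf
  have hcont : Continuous h := continuous_iff_continuousAt.2 fun x ↦ (hh x).continuousAt
  intro x hx
  by_contra! hneg
  -- After a zero `z` of `h` the source `f` vanishes, hence so does the derivative of `h`.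
  obtain ⟨z, hz, hz0⟩ := intermediate_value_Icc' hx hcont.continuousOn ⟨hneg.le, ha⟩
  have hV : ∀ y ∈ Ici z, expTail f y = 0 := fun y hy ↦
    expTail_eq_zero fun t ht ↦ hfh t (hz0 ▸ hanti ((mem_Ici.1 hy).trans (le_of_lt ht)))
  have hxz := constant_of_has_deriv_right_zero hcont.continuousOn
    (fun y hy ↦ by simpa [hV y hy.1] using (hh y).hasDerivWithinAt (s := Ici y)) x ⟨hz.2, le_rfl⟩
  exact hneg.ne (hxz.trans hz0)

end LyapunovPerron

lemma hasDerivAt_iteratedDeriv_of_contDiffAt {E : Type*} [NormedAddCommGroup E] [NormedSpace ℝ E]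
    {f : ℝ → E} {x : ℝ} {m : ℕ} {n : WithTop ℕ∞} (hf : ContDiffAt ℝ n f x) (hmn : m < n) :
    HasDerivAt (iteratedDeriv m f) (iteratedDeriv (m + 1) f x) x := by
  have hdiff := hf.contDiffWithinAt.differentiableWithinAt_iteratedDerivWithin (s := univ) hmn
    (by simp)
  rw [iteratedDerivWithin_univ, differentiableWithinAt_univ] at hdiff
  rw [iteratedDeriv_succ]
  exact hdiff.hasDerivAt

/-- `h` solves `h'' - 2 h' = h ^ 2` at every point of `s`, with two-sided derivatives. The two
conditions say that `(h, h')` is an integral curve of `phaseField`. -/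
def IsSolutionOn (h : ℝ → ℝ) (s : Set ℝ) : Prop :=
  ∀ x ∈ s, HasDerivAt h (deriv h x) x ∧ HasDerivAt (deriv h) (2 * deriv h x + h x ^ 2) x

/-- The vector field on the phase plane `(h, h')` of the equation `h'' - 2 h' = h ^ 2`. -/
def phaseField (z : ℝ × ℝ) : ℝ × ℝ := (z.2, 2 * z.2 + z.1 ^ 2)

lemma contDiff_phaseField {n : WithTop ℕ∞} : ContDiff ℝ n phaseField := by
  unfold phaseField
  fun_prop

namespace IsSolutionOn

section Basic

variable {h v : ℝ → ℝ} {s t : Set ℝ}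

lemma mono (hh : IsSolutionOn h t) (hst : s ⊆ t) : IsSolutionOn h s := fun x hx ↦ hh x (hst hx)

lemma of_hasDerivAt (hs : IsOpen s) (hh : ∀ x ∈ s, HasDerivAt h (v x) x)
    (hv : ∀ x ∈ s, HasDerivAt v (2 * v x + h x ^ 2) x) : IsSolutionOn h s := by
  intro x hx
  have hderiv : deriv h =ᶠ[𝓝 x] v := by
    filter_upwards [hs.mem_nhds hx] with y hy using (hh y hy).deriv
  rw [hderiv.eq_of_nhds]
  exact ⟨hh x hx, (hv x hx).congr_of_eventuallyEq hderiv⟩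

lemma comp_add_const (hh : IsSolutionOn h s) (c : ℝ) :
    IsSolutionOn (fun x ↦ h (x + c)) ((· + c) ⁻¹' s) := by
  intro x hx
  have hderiv : deriv (fun x ↦ h (x + c)) = fun x ↦ deriv h (x + c) := by
    ext y
    exact deriv_comp_add_const h c y
  rw [hderiv]
  exact ⟨(hh _ hx).1.comp_add_const x c, (hh _ hx).2.comp_add_const x c⟩

lemma continuousOn (hh : IsSolutionOn h s) : ContinuousOn h s :=
  fun x hx ↦ (hh x hx).1.continuousAt.continuousWithinAt

lemma isIntegralCurveOn (hh : IsSolutionOn h s) :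
    IsIntegralCurveOn (fun x ↦ (h x, deriv h x)) (fun _ ↦ phaseField) s :=
  fun x hx ↦ ((hh x hx).1.prodMk (hh x hx).2).hasDerivWithinAt

lemma of_isIntegralCurveOn {γ : ℝ → ℝ × ℝ} (hs : IsOpen s)
    (hγ : IsIntegralCurveOn γ (fun _ ↦ phaseField) s) :
    IsSolutionOn (fun x ↦ (γ x).1) s ∧ EqOn (fun x ↦ ((γ x).1, deriv (fun x ↦ (γ x).1) x)) γ s := by
  have hderiv x (hx : x ∈ s) : HasDerivAt γ (phaseField (γ x)) x :=
    (hγ.isIntegralCurveAt (hs.mem_nhds hx)).hasDerivAt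
  have hfst x (hx : x ∈ s) : HasDerivAt (fun x ↦ (γ x).1) (γ x).2 x := (hderiv x hx).fst
  exact ⟨of_hasDerivAt hs hfst fun x hx ↦ (hderiv x hx).snd,
    fun x hx ↦ Prod.ext rfl (hfst x hx).deriv⟩

lemma contDiffOn (hh : IsSolutionOn h s) (hs : IsOpen s) : ContDiffOn ℝ (⊤ : ℕ∞) h s := by
  have hn : ∀ n : ℕ, ContDiffOn ℝ n h s ∧ ContDiffOn ℝ n (deriv h) s := by
    intro n
    induction n with
    | zero =>
      exact ⟨contDiffOn_zero.2 hh.continuousOn,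
        contDiffOn_zero.2 fun x hx ↦ (hh x hx).2.continuousAt.continuousWithinAt⟩
    | succ n ih =>
      have hsucc {f : ℝ → ℝ} (hf : ∀ x ∈ s, DifferentiableAt ℝ f x)
          (hf' : ContDiffOn ℝ n (deriv f) s) : ContDiffOn ℝ (n + 1 : ℕ) f s :=
        (contDiffOn_succ_iff_deriv_of_isOpen hs).2
          ⟨fun x hx ↦ (hf x hx).differentiableWithinAt, by simp, hf'⟩
      refine ⟨hsucc (fun x hx ↦ (hh x hx).1.differentiableAt) ih.2,
        hsucc (fun x hx ↦ (hh x hx).2.differentiableAt) ?_⟩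
      exact ((contDiffOn_const.mul ih.2).add (ih.1.pow 2)).congr fun x hx ↦ (hh x hx).2.deriv
  exact contDiffOn_infty.2 fun n ↦ (hn n).1

lemma iteratedDeriv_add_two (hh : IsSolutionOn h s) (hs : IsOpen s) (n : ℕ) {x : ℝ} (hx : x ∈ s) :
    iteratedDeriv (n + 2) h x = 2 * iteratedDeriv (n + 1) h x +
      ∑ i ∈ Finset.range (n + 1), n.choose i * iteratedDeriv i h x * iteratedDeriv (n - i) h x := by
  have hh' : ContDiffAt ℝ n h x :=
    ((hh.contDiffOn hs).contDiffAt (hs.mem_nhds hx)).of_le (by exact_mod_cast le_top)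
  have hderiv : ContDiffAt ℝ n (deriv h) x :=
    ((hh.contDiffOn hs).deriv_of_isOpen hs (m := n) (by exact_mod_cast le_top)).contDiffAt
      (hs.mem_nhds hx)
  have heq : deriv (deriv h) =ᶠ[𝓝 x] fun y ↦ 2 * deriv h y + h y * h y := by
    filter_upwards [hs.mem_nhds hx] with y hy using by rw [(hh y hy).2.deriv, sq]
  rw [iteratedDeriv_succ', iteratedDeriv_succ', heq.iteratedDeriv_eq,
    iteratedDeriv_fun_add (contDiffAt_const.mul hderiv) (hh'.mul hh'),
    iteratedDeriv_const_mul 2 hderiv, iteratedDeriv_fun_mul hh' hh', iteratedDeriv_succ']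

lemma neg_one_pow_mul_iteratedDeriv_add_two (hh : IsSolutionOn h s) (hs : IsOpen s) (n : ℕ) {x : ℝ}
    (hx : x ∈ s) : (-1) ^ (n + 2) * iteratedDeriv (n + 2) h x =
      ∑ i ∈ Finset.range (n + 1), n.choose i * ((-1) ^ i * iteratedDeriv i h x) *
        ((-1) ^ (n - i) * iteratedDeriv (n - i) h x) -
      2 * ((-1) ^ (n + 1) * iteratedDeriv (n + 1) h x) := by
  have hsum : ∑ i ∈ Finset.range (n + 1), n.choose i * ((-1) ^ i * iteratedDeriv i h x) *
      ((-1) ^ (n - i) * iteratedDeriv (n - i) h x) = (-1) ^ n *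
      ∑ i ∈ Finset.range (n + 1), n.choose i * iteratedDeriv i h x * iteratedDeriv (n - i) h x := by
    rw [Finset.mul_sum]
    refine Finset.sum_congr rfl fun i hi ↦ ?_
    rw [← pow_mul_pow_sub (-1 : ℝ) (Finset.mem_range_succ_iff.1 hi)]
    ring
  rw [hsum, hh.iteratedDeriv_add_two hs n hx]
  ring

lemma hasDerivAt_iteratedDeriv (hh : IsSolutionOn h s) (hs : IsOpen s) (n : ℕ) {x : ℝ}
    (hx : x ∈ s) : HasDerivAt (iteratedDeriv n h) (iteratedDeriv (n + 1) h x) x :=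
  hasDerivAt_iteratedDeriv_of_contDiffAt ((hh.contDiffOn hs).contDiffAt (hs.mem_nhds hx))
    (by exact_mod_cast WithTop.coe_lt_top n)

end Basic

section HalfLine

variable {h k : ℝ → ℝ} {a : ℝ}

lemma deriv_nonpos (hh : IsSolutionOn h (Ioi a)) : ∀ x ∈ Ioi a, deriv h x ≤ 0 := by
  intro x hx
  by_contra! hpos
  have hsub : Ici x ⊆ Ioi a := Ici_subset_Ioi.2 hx
  have hderiv_ge : ∀ᶠ y in atTop, deriv h x ≤ deriv h y := by
    filter_upwards [eventually_ge_atTop x] with y hy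
    exact monotoneOn_Ici_of_mul_le_hasDerivAt zero_le_two (fun z hz ↦ (hh z (hsub hz)).2)
      (fun z _ ↦ by linarith [sq_nonneg (h z)]) hpos.le self_mem_Ici hy hy
  have hsol : ∀ᶠ y in atTop, y ∈ Ioi a := eventually_gt_atTop a
  have hlim : Tendsto h atTop atTop :=
    tendsto_atTop_of_le_hasDerivAt hpos (hsol.mono fun y hy ↦ (hh y hy).1) hderiv_ge
  have henergy : Tendsto (fun y ↦ deriv h y ^ 2 / 2 - h y ^ 3 / 3) atTop atTop := by
    refine tendsto_atTop_of_le_hasDerivAt (u' := fun y ↦ 2 * deriv h y ^ 2)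
      (c := 2 * deriv h x ^ 2) (by positivity) (hsol.mono fun y hy ↦ ?_) ?_
    · convert! (((hh y hy).2.pow 2).div_const 2).sub (((hh y hy).1.pow 3).div_const 3) using 1
      push_cast
      ring
    · filter_upwards [hderiv_ge] with y hy
      gcongr
  refine not_eventually_mul_pow_three_le_sq_hasDerivAt (c := 2 / 3) (by norm_num)
    (hsol.mono fun y hy ↦ (hh y hy).1) (hlim.eventually_gt_atTop 0)
    (hderiv_ge.mono fun y hy ↦ hpos.trans_le hy) ?_
  filter_upwards [henergy.eventually_ge_atTop 0] with y hy
  linarith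

lemma antitoneOn (hh : IsSolutionOn h (Ioi a)) : AntitoneOn h (Ioi a) :=
  antitoneOn_of_hasDerivWithinAt_nonpos (convex_Ioi a) hh.continuousOn
    (fun x hx ↦ (hh x (interior_subset hx)).1.hasDerivWithinAt)
    fun x hx ↦ hh.deriv_nonpos x (interior_subset hx)

lemma hasDerivAt_deriv_sub_two_mul (hh : IsSolutionOn h (Ioi a)) :
    ∀ᶠ x in atTop, HasDerivAt (fun x ↦ deriv h x - 2 * h x) (h x ^ 2) x := by
  filter_upwards [eventually_gt_atTop a] with x hx
  convert! (hh x hx).2.sub ((hh x hx).1.const_mul 2) using 1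
  ring

lemma nonneg (hh : IsSolutionOn h (Ioi a)) : ∀ x ∈ Ioi a, 0 ≤ h x := by
  intro x hx
  by_contra! hneg
  have hle : ∀ᶠ y in atTop, h y ≤ h x := by
    filter_upwards [eventually_ge_atTop x] with y hy using hh.antitoneOn hx (hx.trans_le hy) hy
  have hpos : ∀ᶠ y in atTop, 0 < deriv h y - 2 * h y := by
    refine (tendsto_atTop_of_le_hasDerivAt (sq_pos_of_neg hneg)
      hh.hasDerivAt_deriv_sub_two_mul ?_).eventually_gt_atTop 0
    filter_upwards [hle] with y hy
    nlinarith
  refine not_eventually_mul_rpow_le_hasDerivAt (r := 2) (c := 1 / 4) one_lt_two (by norm_num)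
    hh.hasDerivAt_deriv_sub_two_mul hpos ?_
  filter_upwards [hpos, eventually_gt_atTop a] with y hy hya
  rw [Real.rpow_two]
  nlinarith [hh.deriv_nonpos y hya]

lemma tendsto_zero (hh : IsSolutionOn h (Ioi a)) : Tendsto h atTop (𝓝 0) := by
  refine tendsto_order.2 ⟨fun b hb ↦ ?_, fun b hb ↦ ?_⟩
  · filter_upwards [eventually_gt_atTop a] with x hx using hb.trans_le (hh.nonneg x hx)
  obtain ⟨x, hx, hxb⟩ : ∃ x ∈ Ioi a, h x < b := by
    by_contra! hge
    have hlim := tendsto_atTop_of_le_hasDerivAt (c := b ^ 2) (by positivity)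
      hh.hasDerivAt_deriv_sub_two_mul
      (by filter_upwards [eventually_gt_atTop a] with x hx using by gcongr; exact hge x hx)
    obtain ⟨x, hx, hxa⟩ := ((hlim.eventually_gt_atTop 0).and (eventually_gt_atTop a)).exists
    linarith [hh.deriv_nonpos x hxa, hge x hxa]
  filter_upwards [eventually_ge_atTop x] with y hy
  exact (hh.antitoneOn hx (hx.trans_le hy) hy).trans_lt hxb

lemma not_tendsto_atTop (hh : IsSolutionOn h (Ioi a)) : ¬ Tendsto h atTop atTop :=
  not_tendsto_atTop_of_tendsto_nhds hh.tendsto_zero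

lemma sub_mul_deriv_sub_nonpos (hh : IsSolutionOn h (Ioi a)) (hk : IsSolutionOn k (Ioi a)) :
    ∀ x ∈ Ioi a, (h x - k x) * (deriv h x - deriv k x) ≤ 0 := by
  have hu x (hx : x ∈ Ioi a) : HasDerivAt (fun x ↦ (h x - k x) ^ 2 / 2)
      ((h x - k x) * (deriv h x - deriv k x)) x := by
    convert! (((hh x hx).1.sub (hk x hx).1).pow 2).div_const 2 using 1
    push_cast
    simp only [Pi.sub_apply]
    ring
  have hu' x (hx : x ∈ Ioi a) : HasDerivAt (fun x ↦ (h x - k x) * (deriv h x - deriv k x))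
      ((deriv h x - deriv k x) ^ 2 + 2 * ((h x - k x) * (deriv h x - deriv k x)) +
        (h x - k x) ^ 2 * (h x + k x)) x := by
    convert! ((hh x hx).1.sub (hk x hx).1).mul ((hh x hx).2.sub (hk x hx).2) using 1
    simp only [Pi.sub_apply]
    ring
  have hlim : Tendsto (fun x ↦ (h x - k x) ^ 2 / 2) atTop (𝓝 0) := by
    simpa using ((hh.tendsto_zero.sub hk.tendsto_zero).pow 2).div_const 2
  refine hasDerivAt_nonpos_of_not_tendsto_atTop zero_le_two hu hu' (fun x hx ↦ ?_)
    (not_tendsto_atTop_of_tendsto_nhds hlim)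
  have := mul_nonneg (sq_nonneg (h x - k x)) (add_nonneg (hh.nonneg x hx) (hk.nonneg x hx))
  linarith [sq_nonneg (deriv h x - deriv k x)]

lemma eqOn_Ici (hh : IsSolutionOn h (Ioi a)) (hk : IsSolutionOn k (Ioi a))
    (hha : ContinuousOn h (Ici a)) (hka : ContinuousOn k (Ici a))
    (hhk : h a = k a) : EqOn h k (Ici a) := by
  have hanti : AntitoneOn (fun x ↦ (h x - k x) ^ 2) (Ici a) := by
    refine antitoneOn_of_hasDerivWithinAt_nonpos (convex_Ici a) ((hha.sub hka).pow 2)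
      (f' := fun x ↦ 2 * ((h x - k x) * (deriv h x - deriv k x))) (fun x hx ↦ ?_) fun x hx ↦ ?_
    · rw [interior_Ici] at hx
      convert! (((hh x hx).1.sub (hk x hx).1).pow 2).hasDerivWithinAt using 1
      simp [mul_assoc]
    · rw [interior_Ici] at hx
      linarith [hh.sub_mul_deriv_sub_nonpos hk x hx]
  intro x hx
  have hle := hanti self_mem_Ici hx hx
  simp only [hhk, sub_self] at hle
  nlinarith [sq_nonneg (h x - k x)]

lemma pos_of_exists_ne_zero (hh : IsSolutionOn h (Ioi a)) (hne : ∃ x ∈ Ioi a, h x ≠ 0) :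
    ∀ x ∈ Ioi a, 0 < h x := by
  intro x hx
  refine (hh.nonneg x hx).lt_of_ne fun h0 ↦ ?_
  have hsub : Ici x ⊆ Ioi a := Ici_subset_Ioi.2 hx
  have hzero : ∀ y ∈ Ici x, h y = 0 := fun y hy ↦
    (h0 ▸ hh.antitoneOn hx (hsub hy) hy).antisymm (hh.nonneg y (hsub hy))
  have hderiv : deriv h (x + 1) = 0 := by
    have hconst : h =ᶠ[𝓝 (x + 1)] fun _ ↦ 0 := by
      filter_upwards [Ici_mem_nhds (lt_add_one x)] using hzero
    simpa using hconst.deriv_eq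
  have hconst : IsIntegralCurveOn (fun _ ↦ (0 : ℝ × ℝ)) (fun _ ↦ phaseField) (Ioi a) :=
    (isIntegralCurve_const fun _ ↦ by simp [phaseField]).isIntegralCurveOn _
  have heq := eqOn_Ioi_of_isIntegralCurveOn contDiff_phaseField hh.isIntegralCurveOn hconst
    (lt_add_of_lt_of_pos hx one_pos) (by simp [hderiv, hzero])
  obtain ⟨y, hy, hy0⟩ := hne
  exact hy0 (congrArg Prod.fst (heq hy))

lemma neg_one_pow_mul_iteratedDeriv_pos (hh : IsSolutionOn h (Ioi a))
    (hpos : ∀ x ∈ Ioi a, 0 < h x) (n : ℕ) :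
    ∀ x ∈ Ioi a, 0 < (-1) ^ n * iteratedDeriv n h x := by
  induction n using Nat.strong_induction_on with
  | _ n ih =>
  have hderiv (i : ℕ) x (hx : x ∈ Ioi a) : HasDerivAt (fun x ↦ (-1) ^ i * iteratedDeriv i h x)
      (-((-1) ^ (i + 1) * iteratedDeriv (i + 1) h x)) x := by
    convert! (hh.hasDerivAt_iteratedDeriv isOpen_Ioi i hx).const_mul ((-1) ^ i) using 1
    ring
  rcases n with - | n
  · simpa using hpos
  have hlim : ¬ Tendsto (fun x ↦ (-1) ^ n * iteratedDeriv n h x) atTop atTop := by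
    rcases n with - | m
    · simpa using hh.not_tendsto_atTop
    intro hlim
    have hneg := tendsto_atTop_of_le_hasDerivAt zero_lt_one
      ((eventually_gt_atTop a).mono fun x hx ↦ (hderiv m x hx).neg)
      (by simpa only [neg_neg] using hlim.eventually_ge_atTop 1)
    obtain ⟨x, hx, hxa⟩ := ((hneg.eventually_gt_atTop 0).and (eventually_gt_atTop a)).exists
    exact (ih m (by lia) x hxa).not_gt (neg_pos.1 hx)
  have hneg := hasDerivAt_neg_of_not_tendsto_atTop zero_le_two (hderiv n)
    (fun x hx ↦ (hderiv (n + 1) x hx).neg) (fun x hx ↦ ?_) hlim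
  · exact fun x hx ↦ neg_neg_iff_pos.1 (hneg x hx)
  have hsum : 0 < ∑ i ∈ Finset.range (n + 1), n.choose i * ((-1) ^ i * iteratedDeriv i h x) *
      ((-1) ^ (n - i) * iteratedDeriv (n - i) h x) := by
    refine Finset.sum_pos (fun i hi ↦ ?_) ⟨0, by simp⟩
    have hin : i ≤ n := Finset.mem_range_succ_iff.1 hi
    have hchoose : (0 : ℝ) < n.choose i := by exact_mod_cast Nat.choose_pos hin
    exact mul_pos (mul_pos hchoose (ih i (by lia) x hx)) (ih (n - i) (by lia) x hx)
  linarith [hh.neg_one_pow_mul_iteratedDeriv_add_two isOpen_Ioi n hx]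

lemma deriv_neg (hh : IsSolutionOn h (Ioi a)) (hpos : ∀ x ∈ Ioi a, 0 < h x) :
    ∀ x ∈ Ioi a, deriv h x < 0 := by
  intro x hx
  simpa using hh.neg_one_pow_mul_iteratedDeriv_pos hpos 1 x hx

lemma two_mul_deriv_add_sq_pos (hh : IsSolutionOn h (Ioi a)) (hpos : ∀ x ∈ Ioi a, 0 < h x) :
    ∀ x ∈ Ioi a, 0 < 2 * deriv h x + h x ^ 2 := by
  intro x hx
  have hpos₂ := hh.neg_one_pow_mul_iteratedDeriv_pos hpos 2 x hx
  rwa [iteratedDeriv_succ, iteratedDeriv_one, (hh x hx).2.deriv, neg_one_sq, one_mul] at hpos₂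

lemma tendsto_nhdsGT_atTop (hh : IsSolutionOn h (Ioi a)) (hpos : ∀ x ∈ Ioi a, 0 < h x)
    (hK : ∀ K, IsCompact K → ∀ᶠ x in 𝓝[>] a, (h x, deriv h x) ∉ K) :
    Tendsto h (𝓝[>] a) atTop := by
  refine tendsto_atTop.2 fun B ↦ ?_
  filter_upwards [hK _ (isCompact_Icc.prod isCompact_Icc : IsCompact (Icc 0 B ×ˢ Icc (-B ^ 2) 0)),
    self_mem_nhdsWithin] with x hxK hx
  by_contra! hB
  have hderiv := hh.two_mul_deriv_add_sq_pos hpos x hx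
  exact hxK ⟨⟨(hpos x hx).le, hB.le⟩, by nlinarith [hpos x hx], (hh.deriv_neg hpos x hx).le⟩

end HalfLine

section Entire

variable {h : ℝ → ℝ} {a : ℝ}

lemma not_forall_pos_of_univ (hh : IsSolutionOn h univ) : ¬ ∀ x, 0 < h x := by
  intro hpos
  -- In reversed time the solution `u` increases to infinity, with speed `p`.
  let u (t : ℝ) : ℝ := h (-t)
  let p (t : ℝ) : ℝ := -deriv h (-t)
  have hu t : HasDerivAt u (p t) t := by
    convert! (hh (-t) trivial).1.comp t (hasDerivAt_neg t) using 1
    simp only [p, mul_neg_one]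
  have hp t : HasDerivAt p (u t ^ 2 - 2 * p t) t := by
    convert! ((hh (-t) trivial).2.comp t (hasDerivAt_neg t)).neg using 1
    simp only [u, p]
    ring
  have hsol t : IsSolutionOn h (Ioi (-t - 1)) := hh.mono (subset_univ _)
  have hp_pos t : 0 < p t :=
    neg_pos.2 ((hsol t).deriv_neg (fun x _ ↦ hpos x) (-t) (mem_Ioi.2 (sub_one_lt _)))
  have hp' t : 0 ≤ u t ^ 2 - 2 * p t := by
    have := (hsol t).two_mul_deriv_add_sq_pos (fun x _ ↦ hpos x) (-t) (mem_Ioi.2 (sub_one_lt _))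
    simp only [u, p]
    linarith
  have hlim : Tendsto u atTop atTop := by
    refine tendsto_atTop_of_le_hasDerivAt (hp_pos 0) (.of_forall hu) ?_
    filter_upwards [eventually_ge_atTop 0] with t ht using monotone_of_hasDerivAt_nonneg hp hp' ht
  exact not_eventually_mul_pow_three_le_sq_hasDerivAt (c := 1 / 9) (by norm_num)
    (.of_forall hu) (.of_forall fun t ↦ hpos (-t)) (.of_forall hp_pos)
    (eventually_mul_pow_three_le_sq_of_hasDerivAt hu hp (fun t ↦ (hpos (-t)).le) hp' hlim)

lemma exists_maximal_extension (hh : IsSolutionOn h (Ioi a)) :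
    ∃ H, EqOn H h (Ioi a) ∧ (IsSolutionOn H univ ∨ ∃ m ≤ a, IsSolutionOn H (Ioi m) ∧
      ∀ K, IsCompact K → ∀ᶠ x in 𝓝[>] m, (H x, deriv H x) ∉ K) := by
  obtain ⟨Γ, hΓ, hmax⟩ := exists_maximal_backward_extension contDiff_phaseField hh.isIntegralCurveOn
  refine ⟨fun x ↦ (Γ x).1, fun x hx ↦ congrArg Prod.fst (hΓ hx), ?_⟩
  refine hmax.imp (fun hΓ ↦ ?_) fun ⟨m, hma, hΓ, hK⟩ ↦ ?_
  · exact (of_isIntegralCurveOn isOpen_univ (hΓ.isIntegralCurveOn _)).1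
  · obtain ⟨hsol, heq⟩ := of_isIntegralCurveOn isOpen_Ioi hΓ
    refine ⟨m, hma, hsol, fun K hKc ↦ ?_⟩
    filter_upwards [hK K hKc, self_mem_nhdsWithin] with x hx hxm
    rwa [← heq hxm] at hx

end Entire

end IsSolutionOn

section Existence

open NNReal

lemma lipschitzWith_sq_projIcc (r : ℝ≥0) :
    LipschitzWith (2 * r) fun z ↦ (projIcc 0 (r : ℝ) r.coe_nonneg z : ℝ) ^ 2 := by
  refine .of_dist_le_mul fun z w ↦ ?_
  have hproj := (LipschitzWith.projIcc r.coe_nonneg).dist_le_mul z w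
  rw [NNReal.coe_one, one_mul, Subtype.dist_eq, Real.dist_eq, Real.dist_eq] at hproj
  have hnonneg (z : ℝ) : 0 ≤ (projIcc 0 (r : ℝ) r.coe_nonneg z : ℝ) := (projIcc _ _ _ z).2.1
  have hle (z : ℝ) : (projIcc 0 (r : ℝ) r.coe_nonneg z : ℝ) ≤ r := (projIcc _ _ _ z).2.2
  rw [Real.dist_eq, Real.dist_eq, sq_sub_sq, abs_mul,
    abs_of_nonneg (add_nonneg (hnonneg z) (hnonneg w))]
  refine mul_le_mul ?_ hproj (abs_nonneg _) (by positivity)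
  rw [NNReal.coe_mul, NNReal.coe_ofNat]
  linarith [hle z, hle w]

lemma exists_isSolutionOn_Ioi_ne_zero :
    ∃ h, IsSolutionOn h (Ioi 0) ∧ ∃ x ∈ Ioi (0 : ℝ), h x ≠ 0 := by
  -- Clipping the square to `[0, 1 / 4]` makes it a contraction, and the solution stays in this
  -- interval.
  let r : ℝ≥0 := 1 / 4
  let φ (z : ℝ) : ℝ := (projIcc 0 (r : ℝ) r.coe_nonneg z : ℝ) ^ 2
  obtain ⟨h, h0, hh, hV⟩ := exists_hasDerivAt_neg_expTail (lipschitzWith_sq_projIcc r)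
    (by rw [← NNReal.coe_lt_coe]; norm_num [r]) r
  have hφ_nonneg t : 0 ≤ φ (h t) := sq_nonneg _
  have hφ_zero t (ht : h t ≤ 0) : φ (h t) = 0 := by simp [φ, projIcc_of_le_left r.coe_nonneg ht]
  have hφ_sq x (hx : x ∈ Ioi 0) : φ (h x) = h x ^ 2 := by
    have hmem : h x ∈ Icc (0 : ℝ) r :=
      ⟨nonneg_of_hasDerivAt_neg_expTail hh hφ_nonneg hφ_zero (h0 ▸ r.coe_nonneg) x
          (Ioi_subset_Ici_self hx),
        h0 ▸ antitone_of_hasDerivAt_neg_expTail hh hφ_nonneg (le_of_lt hx)⟩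
    simp only [φ, projIcc_of_mem r.coe_nonneg hmem]
  refine ⟨h, .of_hasDerivAt isOpen_Ioi (fun x _ ↦ hh x) fun x hx ↦ ?_, ?_⟩
  · rw [← hφ_sq x hx]
    convert! (hV x).neg using 1
    ring
  · have hne : ∀ᶠ x in 𝓝[>] 0, h x ≠ 0 :=
      ((hh 0).continuousAt.eventually_ne (by norm_num [h0, r])).filter_mono nhdsWithin_le_nhds
    obtain ⟨x, hx, hx0⟩ := (hne.and self_mem_nhdsWithin).exists
    exact ⟨x, hx0, hx⟩

end Existence

section Profile

lemma exists_profile : ∃ H, IsSolutionOn H (Ioi 0) ∧ (∀ x ∈ Ioi (0 : ℝ), 0 < H x) ∧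
    Tendsto H (𝓝[>] 0) atTop := by
  obtain ⟨h, hh, y, hy, hy0⟩ := exists_isSolutionOn_Ioi_ne_zero
  obtain ⟨H, hHh, hH⟩ := hh.exists_maximal_extension
  have hpos {b : ℝ} (hb : b ≤ 0) (hHb : IsSolutionOn H (Ioi b)) : ∀ x ∈ Ioi b, 0 < H x :=
    hHb.pos_of_exists_ne_zero ⟨y, Ioi_subset_Ioi hb hy, hHh hy ▸ hy0⟩
  rcases hH with hH | ⟨m, hm, hH, hK⟩
  · refine absurd (fun x ↦ ?_) hH.not_forall_pos_of_univ
    obtain ⟨b, hb⟩ := exists_lt (min x 0)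
    exact hpos (hb.le.trans (min_le_right _ _)) (hH.mono (subset_univ _)) x
      (hb.trans_le (min_le_left _ _))
  have hpre : (· + m) ⁻¹' Ioi m = Ioi 0 := by simp
  have hshift : Tendsto (· + m) (𝓝[>] 0) (𝓝[>] m) := by
    refine tendsto_nhdsWithin_iff.2 ⟨?_, ?_⟩
    · simpa using ((continuous_add_const m).tendsto 0).mono_left nhdsWithin_le_nhds
    · filter_upwards [self_mem_nhdsWithin] with x hx using hpre.ge hx
  exact ⟨fun x ↦ H (x + m), hpre ▸ hH.comp_add_const m,
    fun x hx ↦ hpos hm hH _ (hpre.ge hx), (hH.tendsto_nhdsGT_atTop (hpos hm hH) hK).comp hshift⟩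

namespace IsSolutionOn

variable {h H : ℝ → ℝ} {a : ℝ}

lemma of_contDiffOn_Ici (hh : ContDiffOn ℝ 2 h (Ici a))
    (hode : ∀ x ∈ Ioi a, iteratedDerivWithin 2 h (Ici a) x -
      2 * iteratedDerivWithin 1 h (Ici a) x = h x ^ 2) : IsSolutionOn h (Ioi a) := by
  refine .of_hasDerivAt isOpen_Ioi (v := iteratedDerivWithin 1 h (Ici a)) (fun x hx ↦ ?_)
    fun x hx ↦ ?_
  · rw [iteratedDerivWithin_one]
    exact (hh.differentiableOn (by simp) x (Ioi_subset_Ici_self hx)).hasDerivWithinAt.hasDerivAt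
      (Ici_mem_nhds hx)
  · rw [add_comm, ← sub_eq_iff_eq_add.1 (hode x hx), iteratedDerivWithin_succ (n := 1)]
    exact (hh.differentiableOn_iteratedDerivWithin (by norm_num) (uniqueDiffOn_Ici a) x
      (Ioi_subset_Ici_self hx)).hasDerivWithinAt.hasDerivAt (Ici_mem_nhds hx)

lemma pos_left_of_exists_ne_zero (hh : IsSolutionOn h (Ioi a)) (hcont : ContinuousOn h (Ici a))
    (hne : ∃ x ∈ Ici a, h x ≠ 0) : 0 < h a := by
  have hne' : ∃ x ∈ Ioi a, h x ≠ 0 := by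
    by_contra! hzero
    obtain ⟨x, hx, hx0⟩ := hne
    exact hx0 (EqOn.of_subset_closure hzero hcont continuousOn_const Ioi_subset_Ici_self
      (closure_Ioi a).ge hx)
  have hlim : Tendsto h (𝓝[>] a) (𝓝 (h a)) :=
    (hcont a self_mem_Ici).mono_left (nhdsWithin_mono a Ioi_subset_Ici_self)
  have hmem : a + 1 ∈ Ioi a := lt_add_one a
  refine (hh.pos_of_exists_ne_zero hne' (a + 1) hmem).trans_le (ge_of_tendsto hlim ?_)
  filter_upwards [Ioo_mem_nhdsGT (lt_add_one a)] with x hx using hh.antitoneOn hx.1 hmem hx.2.le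

lemma exists_forall_eq_comp_add_const (hh : IsSolutionOn h (Ioi 0))
    (hcont : ContinuousOn h (Ici 0)) (h0 : 0 < h 0) (hH : IsSolutionOn H (Ioi 0))
    (hlim : Tendsto H (𝓝[>] 0) atTop) : ∃ c, 0 < c ∧ ∀ x ∈ Ici 0, h x = H (x + c) := by
  obtain ⟨c, hc, hHc⟩ := isPreconnected_Ioi.intermediate_value_Ioi
    (le_principal_iff.2 (Ioi_mem_atTop 0)) (le_principal_iff.2 self_mem_nhdsWithin)
    hH.continuousOn hH.tendsto_zero hlim h0
  have hsub : Ici 0 ⊆ (· + c) ⁻¹' Ioi 0 := fun x hx ↦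
    mem_Ioi.2 (add_pos_of_nonneg_of_pos (mem_Ici.1 hx) hc)
  have hHsol := (hH.comp_add_const c).mono hsub
  exact ⟨c, hc, hh.eqOn_Ici (hHsol.mono Ioi_subset_Ici_self) hcont hHsol.continuousOn
    (by simp [hHc])⟩

end IsSolutionOn

end Profile

/-- There is a single smooth, totally monotone profile `h_∞ : (0,∞) → (0,∞)`,
blowing up at `0` and vanishing at `∞`, such that every not-identically-zero
smooth solution of `h'' - 2h' = h²` on `[0,∞)` is a translate of `h_∞`. -/
theorem hSol_translation_profile :
    ∃ hinf : ℝ → ℝ,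
      ContDiffOn ℝ (⊤ : ℕ∞) hinf (Set.Ioi 0) ∧
      (∀ x ∈ Set.Ioi (0 : ℝ), 0 < hinf x) ∧
      (∀ n : ℕ, 1 ≤ n → ∀ x ∈ Set.Ioi (0 : ℝ),
        0 < (-1 : ℝ) ^ n * iteratedDerivWithin n hinf (Set.Ioi 0) x) ∧
      Filter.Tendsto hinf (nhdsWithin 0 (Set.Ioi 0)) Filter.atTop ∧
      Filter.Tendsto hinf Filter.atTop (nhds 0) ∧
      ∀ h : ℝ → ℝ,
        ContDiffOn ℝ (⊤ : ℕ∞) h (Set.Ici 0) →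
        (∀ x ∈ Set.Ici (0 : ℝ),
          iteratedDerivWithin 2 h (Set.Ici 0) x
            - 2 * iteratedDerivWithin 1 h (Set.Ici 0) x = (h x) ^ 2) →
        (∃ x ∈ Set.Ici (0 : ℝ), h x ≠ 0) →
        ∃ c : ℝ, 0 < c ∧ ∀ x ∈ Set.Ici (0 : ℝ), h x = hinf (x + c) := by
  obtain ⟨H, hH, hpos, hlim⟩ := exists_profile
  refine ⟨H, hH.contDiffOn isOpen_Ioi, hpos, fun n _ x hx ↦ ?_, hlim, hH.tendsto_zero,
    fun h hsmooth hode hne ↦ ?_⟩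
  · rw [iteratedDerivWithin_of_isOpen isOpen_Ioi hx]
    exact hH.neg_one_pow_mul_iteratedDeriv_pos hpos n x hx
  · have hh : IsSolutionOn h (Ioi 0) :=
      .of_contDiffOn_Ici (contDiffOn_infty.1 hsmooth 2)
        fun x hx ↦ hode x (Ioi_subset_Ici_self hx)
    have h0 := hh.pos_left_of_exists_ne_zero hsmooth.continuousOn hne
    exact hh.exists_forall_eq_comp_add_const hsmooth.continuousOn h0 hH hlim
end

section
/- Let h : [0,∞) → ℝ be twice differentiable with h''(x) − 2 h'(x) = h(x)² for all x ≥ 0, and suppose h is not identically zero. Then x · h(x) → 2 as x → ∞, i.e. h(x) ∼ 2/x as x → ∞. -/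
open Set Filter

/-! Let `h'' = k h' + h²` with `k > 0`. A point where `h' > 0` would force `h → ∞`, and then the
energy `h'² - (2/3) h³`, which never decreases, would make `√h` blow up in finite time; so `h`
is antitone. The second derivative `w = h''` satisfies `w' = k w + 2 h h'`, so once `w` has the sign
of `h h'` it grows exponentially in that direction. This is incompatible with `h' ≤ 0` where
`h ≤ 0`, which gives `k h' ≤ -h²` there and hence blow-up of `-h`, so `h ≥ 0`; it is then
incompatible with `h ≥ 0`, which gives `-h' / h² ≤ 1 / k`. Feeding this bound back into the
equation yields `k / (k² + 2 h) ≤ -h' / h²`. Since `-h' / h²` is the derivative of `1 / h`, the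
lower bound gives `h → 0`, so the derivative of `1 / h` tends to `1 / k`, and therefore
`1 / (x h(x)) → 1 / k`. -/

section RealFunctions

variable {f f' : ℝ → ℝ} {a c k x : ℝ}

lemma monotoneOn_Ici_of_hasDerivAt_nonneg (hf : ∀ x ≥ a, HasDerivAt f (f' x) x)
    (hf' : ∀ x ≥ a, 0 ≤ f' x) : MonotoneOn f (Ici a) :=
  monotoneOn_of_hasDerivWithinAt_nonneg (convex_Ici a)
    (fun x hx => (hf x hx).continuousAt.continuousWithinAt)
    (fun x hx => (hf x (interior_subset hx)).hasDerivWithinAt)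
    (fun x hx => hf' x (interior_subset hx))

lemma add_mul_sub_le_of_le_hasDerivAt (hf : ∀ x ≥ a, HasDerivAt f (f' x) x)
    (hf' : ∀ x ≥ a, c ≤ f' x) (hx : a ≤ x) : f a + c * (x - a) ≤ f x := by
  have hmono : MonotoneOn (fun x => f x - c * x) (Ici a) :=
    monotoneOn_Ici_of_hasDerivAt_nonneg
      (fun x hx => (hf x hx).sub ((hasDerivAt_id x).const_mul c))
      (fun x hx => by simpa using hf' x hx)
  have hle : f a - c * a ≤ f x - c * x := hmono self_mem_Ici hx hx
  linarith

lemma tendsto_atTop_of_le_hasDerivAt_s11 (hc : 0 < c) (hf : ∀ x ≥ a, HasDerivAt f (f' x) x)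
    (hf' : ∀ x ≥ a, c ≤ f' x) : Tendsto f atTop atTop := by
  have hline : Tendsto (fun x => f a + c * (x - a)) atTop atTop :=
    tendsto_atTop_add_const_left _ _
      ((tendsto_atTop_add_const_right _ (-a) tendsto_id).const_mul_atTop hc)
  refine tendsto_atTop_mono' _ ?_ hline
  filter_upwards [eventually_ge_atTop a] with x hx
  exact add_mul_sub_le_of_le_hasDerivAt hf hf' hx

lemma mul_exp_le_of_mul_le_hasDerivAt (hf : ∀ x ≥ a, HasDerivAt f (f' x) x)
    (hf' : ∀ x ≥ a, k * f x ≤ f' x) (hx : a ≤ x) : f a * Real.exp (k * (x - a)) ≤ f x := by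
  have hmono : MonotoneOn (fun x => f x * Real.exp (-k * x)) (Ici a) := by
    refine monotoneOn_Ici_of_hasDerivAt_nonneg
      (fun x hx => (hf x hx).mul ((hasDerivAt_id x).const_mul (-k)).exp) (fun x hx => ?_)
    have := mul_nonneg (sub_nonneg.2 (hf' x hx)) (Real.exp_pos (-k * x)).le
    simp only [id_eq, mul_one]
    linarith
  calc f a * Real.exp (k * (x - a))
      = f a * Real.exp (-k * a) * Real.exp (k * x) := by
        rw [mul_assoc, ← Real.exp_add]; ring_nf
    _ ≤ f x * Real.exp (-k * x) * Real.exp (k * x) := by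
        gcongr ?_ * _
        exact hmono self_mem_Ici hx hx
    _ = f x := by rw [mul_assoc, ← Real.exp_add]; simp

lemma le_of_mul_le_hasDerivAt (hk : 0 ≤ k) (hfa : 0 ≤ f a)
    (hf : ∀ x ≥ a, HasDerivAt f (f' x) x) (hf' : ∀ x ≥ a, k * f x ≤ f' x) (hx : a ≤ x) :
    f a ≤ f x :=
  calc f a ≤ f a * Real.exp (k * (x - a)) :=
        le_mul_of_one_le_right hfa (Real.one_le_exp (mul_nonneg hk (sub_nonneg.2 hx)))
    _ ≤ f x := mul_exp_le_of_mul_le_hasDerivAt hf hf' hx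

lemma tendsto_atTop_of_mul_le_hasDerivAt (hk : 0 < k) (hfa : 0 < f a)
    (hf : ∀ x ≥ a, HasDerivAt f (f' x) x) (hf' : ∀ x ≥ a, k * f x ≤ f' x) :
    Tendsto f atTop atTop :=
  tendsto_atTop_of_le_hasDerivAt_s11 (mul_pos hk hfa) hf fun x hx =>
    (mul_le_mul_of_nonneg_left (le_of_mul_le_hasDerivAt hk.le hfa.le hf hf' hx) hk.le).trans
      (hf' x hx)

lemma hasDerivAt_neg_inv {f'x : ℝ} (hf : HasDerivAt f f'x x) (hx : f x ≠ 0) :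
    HasDerivAt (fun y => -(f y)⁻¹) (f'x / f x ^ 2) x :=
  (hf.fun_inv hx).fun_neg.congr_deriv (by ring)

lemma nonpos_of_mul_sq_le_hasDerivAt (hc : 0 < c) (hf : ∀ x ≥ a, HasDerivAt f (f' x) x)
    (hf' : ∀ x ≥ a, c * f x ^ 2 ≤ f' x) : f a ≤ 0 := by
  by_contra! hfa
  have hpos : ∀ x ≥ a, 0 < f x := fun x hx =>
    hfa.trans_le (monotoneOn_Ici_of_hasDerivAt_nonneg hf
      (fun y hy => (by positivity : 0 ≤ c * f y ^ 2).trans (hf' y hy)) self_mem_Ici hx hx)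
  have hlim : Tendsto (fun x => -(f x)⁻¹) atTop atTop :=
    tendsto_atTop_of_le_hasDerivAt_s11 hc (fun x hx => hasDerivAt_neg_inv (hf x hx) (hpos x hx).ne')
      (fun x hx => (le_div_iff₀ (pow_pos (hpos x hx) 2)).2 (hf' x hx))
  obtain ⟨x, hx_nonneg, hx⟩ := ((hlim.eventually_ge_atTop 0).and (eventually_ge_atTop a)).exists
  exact (neg_neg_of_pos (inv_pos.2 (hpos x hx))).not_ge hx_nonneg

lemma eventually_lt_div_self_of_lt_hasDerivAt {l : ℝ} (hlc : l < c)
    (hf : ∀ᶠ x in atTop, HasDerivAt f (f' x) x) (hf' : ∀ᶠ x in atTop, c ≤ f' x) :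
    ∀ᶠ x in atTop, l < f x / x := by
  obtain ⟨b, hb⟩ := eventually_atTop.1 (hf.and hf')
  have hlim : Tendsto (fun x => f x - l * x) atTop atTop :=
    tendsto_atTop_of_le_hasDerivAt_s11 (sub_pos.2 hlc)
      (fun x hx => (hb x hx).1.sub ((hasDerivAt_id x).const_mul l))
      (fun x hx => by simpa using (hb x hx).2)
  filter_upwards [hlim.eventually_gt_atTop 0, eventually_gt_atTop 0] with x hx hx_pos
  exact (lt_div_iff₀ hx_pos).2 (sub_pos.1 hx)

lemma tendsto_div_self_of_tendsto_hasDerivAt (hf : ∀ᶠ x in atTop, HasDerivAt f (f' x) x)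
    (hf' : Tendsto f' atTop (nhds c)) : Tendsto (fun x => f x / x) atTop (nhds c) := by
  refine tendsto_order.2 ⟨fun l hl => ?_, fun u hu => ?_⟩
  · obtain ⟨m, hlm, hmc⟩ := exists_between hl
    exact eventually_lt_div_self_of_lt_hasDerivAt hlm hf (hf'.eventually_const_le hmc)
  · obtain ⟨m, hcm, hmu⟩ := exists_between hu
    have hneg : ∀ᶠ x in atTop, -u < -f x / x :=
      eventually_lt_div_self_of_lt_hasDerivAt (neg_lt_neg hmu)
        (hf.mono fun x hx => hx.fun_neg)
        ((hf'.eventually_le_const hcm).mono fun x hx => neg_le_neg hx)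
    filter_upwards [hneg] with x hx
    rwa [neg_div, neg_lt_neg_iff] at hx

end RealFunctions

/-- `h` solves `h'' - k h' = h²` on the half-line `[a, ∞)`, with derivative `g`. The derivatives
are two-sided, also at `a`: a solution with one-sided derivatives on `[a₀, ∞)` gives one for every
`a > a₀`, which is all that asymptotics require. -/
structure IsSolutionFrom (k a : ℝ) (h g : ℝ → ℝ) : Prop where
  hasDerivAt : ∀ x ≥ a, HasDerivAt h (g x) x
  hasDerivAt_deriv : ∀ x ≥ a, HasDerivAt g (k * g x + h x ^ 2) x

lemma isSolutionFrom_derivWithin {k a b : ℝ} {h : ℝ → ℝ} (hab : a < b)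
    (hf1 : DifferentiableOn ℝ h (Ici a))
    (hf2 : DifferentiableOn ℝ (derivWithin h (Ici a)) (Ici a))
    (hODE : ∀ x ∈ Ici a, derivWithin (derivWithin h (Ici a)) (Ici a) x
      - k * derivWithin h (Ici a) x = h x ^ 2) :
    IsSolutionFrom k b h (derivWithin h (Ici a)) where
  hasDerivAt x hx :=
    (hf1 x (hab.le.trans hx)).hasDerivWithinAt.hasDerivAt (Ici_mem_nhds (hab.trans_le hx))
  hasDerivAt_deriv x hx :=
    ((hf2 x (hab.le.trans hx)).hasDerivWithinAt.hasDerivAt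
      (Ici_mem_nhds (hab.trans_le hx))).congr_deriv
        (by linarith [hODE x (hab.le.trans hx)])

namespace IsSolutionFrom

variable {k a b x : ℝ} {h g : ℝ → ℝ}

lemma mono (hs : IsSolutionFrom k a h g) (hab : a ≤ b) : IsSolutionFrom k b h g where
  hasDerivAt x hx := hs.hasDerivAt x (hab.trans hx)
  hasDerivAt_deriv x hx := hs.hasDerivAt_deriv x (hab.trans hx)

lemma hasDerivAt_second_deriv (hs : IsSolutionFrom k a h g) (hx : a ≤ x) :
    HasDerivAt (fun y => k * g y + h y ^ 2) (k * (k * g x + h x ^ 2) + 2 * (h x * g x)) x :=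
  (((hs.hasDerivAt_deriv x hx).const_mul k).fun_add ((hs.hasDerivAt x hx).fun_pow 2)).congr_deriv
    (by norm_num; ring)

lemma monotoneOn_energy (hk : 0 ≤ k) (hs : IsSolutionFrom k a h g) :
    MonotoneOn (fun x => g x ^ 2 - 2 / 3 * h x ^ 3) (Ici a) := by
  have hderiv : ∀ x ≥ a,
      HasDerivAt (fun y => g y ^ 2 - 2 / 3 * h y ^ 3) (2 * k * g x ^ 2) x := fun x hx =>
    (((hs.hasDerivAt_deriv x hx).fun_pow 2).sub
      (((hs.hasDerivAt x hx).fun_pow 3).const_mul (2 / 3))).congr_deriv (by norm_num; ring)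
  exact monotoneOn_Ici_of_hasDerivAt_nonneg hderiv (fun x _ => by positivity)

lemma eventually_cube_le_four_mul_sq_deriv (hk : 0 ≤ k) (hs : IsSolutionFrom k a h g)
    (hlim : Tendsto h atTop atTop) : ∀ᶠ x in atTop, h x ^ 3 ≤ 4 * g x ^ 2 := by
  have hcube : Tendsto (fun x => h x ^ 3) atTop atTop :=
    (tendsto_pow_atTop three_ne_zero).comp hlim
  filter_upwards [hcube.eventually_ge_atTop (-(12 / 5) * (g a ^ 2 - 2 / 3 * h a ^ 3)),
    eventually_ge_atTop a] with x hlarge hx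
  have henergy : g a ^ 2 - 2 / 3 * h a ^ 3 ≤ g x ^ 2 - 2 / 3 * h x ^ 3 :=
    hs.monotoneOn_energy hk self_mem_Ici hx hx
  linarith

lemma not_tendsto_atTop (hk : 0 ≤ k) (hs : IsSolutionFrom k a h g) (hg : ∀ x ≥ a, 0 ≤ g x) :
    ¬ Tendsto h atTop atTop := fun hlim => by
  obtain ⟨b, hb⟩ := eventually_atTop.1 ((hs.eventually_cube_le_four_mul_sq_deriv hk hlim).and
    ((hlim.eventually_gt_atTop 0).and (eventually_ge_atTop a)))
  have hpos : ∀ x ≥ b, 0 < h x := fun x hx => (hb x hx).2.1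
  refine (Real.sqrt_pos.2 (hpos b le_rfl)).not_ge ?_
  refine nonpos_of_mul_sq_le_hasDerivAt (f := fun x => √(h x)) (c := 1 / 4) (by norm_num)
    (fun x hx => (hs.hasDerivAt x (hb x hx).2.2).sqrt (hpos x hx).ne') (fun x hx => ?_)
  have hsqrt_pos : 0 < √(h x) := Real.sqrt_pos.2 (hpos x hx)
  have hsq : √(h x) ^ 2 = h x := Real.sq_sqrt (hpos x hx).le
  have hcube : √(h x) ^ 3 ≤ 2 * g x := by
    refine le_of_sq_le_sq ?_ (mul_nonneg zero_le_two (hg x (hb x hx).2.2))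
    calc (√(h x) ^ 3) ^ 2 = (√(h x) ^ 2) ^ 3 := by ring
      _ = h x ^ 3 := by rw [hsq]
      _ ≤ 4 * g x ^ 2 := (hb x hx).1
      _ = (2 * g x) ^ 2 := by ring
  rw [le_div_iff₀ (by positivity)]
  linarith

lemma deriv_nonpos (hk : 0 < k) (hs : IsSolutionFrom k a h g) : g a ≤ 0 := by
  by_contra! hga
  have hg : ∀ x ≥ a, g a ≤ g x := fun x hx =>
    le_of_mul_le_hasDerivAt hk.le hga.le hs.hasDerivAt_deriv
      (fun y _ => le_add_of_nonneg_right (sq_nonneg (h y))) hx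
  exact hs.not_tendsto_atTop hk.le (fun x hx => hga.le.trans (hg x hx))
    (tendsto_atTop_of_le_hasDerivAt_s11 hga hs.hasDerivAt hg)

lemma antitoneOn (hk : 0 < k) (hs : IsSolutionFrom k a h g) : AntitoneOn h (Ici a) := by
  have hmono : MonotoneOn (fun x => -h x) (Ici a) :=
    monotoneOn_Ici_of_hasDerivAt_nonneg (fun x hx => (hs.hasDerivAt x hx).fun_neg)
      (fun x hx => neg_nonneg.2 ((hs.mono hx).deriv_nonpos hk))
  exact fun x hx y hy hxy => neg_le_neg_iff.1 (hmono hx hy hxy)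

lemma second_deriv_nonpos_of_nonpos (hk : 0 < k) (hs : IsSolutionFrom k a h g) (ha : h a ≤ 0) :
    k * g a + h a ^ 2 ≤ 0 := by
  by_contra! hpos
  have hgrow : ∀ x ≥ a, k * (k * g x + h x ^ 2) ≤
      k * (k * g x + h x ^ 2) + 2 * (h x * g x) := fun x hx => by
    have hhx : h x ≤ 0 := (hs.antitoneOn hk self_mem_Ici hx hx).trans ha
    have := mul_nonneg_of_nonpos_of_nonpos hhx ((hs.mono hx).deriv_nonpos hk)
    linarith
  have hlim : Tendsto g atTop atTop :=
    tendsto_atTop_of_le_hasDerivAt_s11 hpos hs.hasDerivAt_deriv fun x hx =>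
      le_of_mul_le_hasDerivAt (f := fun y => k * g y + h y ^ 2) hk.le hpos.le
        (fun y hy => hs.hasDerivAt_second_deriv hy) hgrow hx
  obtain ⟨x, hgx, hx⟩ := ((hlim.eventually_gt_atTop 0).and (eventually_ge_atTop a)).exists
  exact hgx.not_ge ((hs.mono hx).deriv_nonpos hk)

lemma nonneg (hk : 0 < k) (hs : IsSolutionFrom k a h g) : 0 ≤ h a := by
  by_contra! ha
  refine (neg_pos.2 ha).not_ge (nonpos_of_mul_sq_le_hasDerivAt (f := fun x => -h x)
    (inv_pos.2 hk) (fun x hx => (hs.hasDerivAt x hx).fun_neg) (fun x hx => ?_))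
  have := (hs.mono hx).second_deriv_nonpos_of_nonpos hk
    ((hs.antitoneOn hk self_mem_Ici hx hx).trans ha.le)
  rw [inv_mul_le_iff₀ hk]
  linarith

lemma second_deriv_nonneg (hk : 0 < k) (hs : IsSolutionFrom k a h g) :
    0 ≤ k * g a + h a ^ 2 := by
  by_contra! hneg
  have hgrow : ∀ x ≥ a, k * -(k * g x + h x ^ 2) ≤
      -(k * (k * g x + h x ^ 2) + 2 * (h x * g x)) := fun x hx => by
    have := mul_nonpos_of_nonneg_of_nonpos ((hs.mono hx).nonneg hk) ((hs.mono hx).deriv_nonpos hk)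
    linarith
  have hlim : Tendsto (fun x => -h x) atTop atTop := by
    refine tendsto_atTop_of_le_hasDerivAt_s11 (div_pos (neg_pos.2 hneg) hk)
      (fun x hx => (hs.hasDerivAt x hx).fun_neg) (fun x hx => ?_)
    have hle : -(k * g a + h a ^ 2) ≤ -(k * g x + h x ^ 2) :=
      le_of_mul_le_hasDerivAt (f := fun y => -(k * g y + h y ^ 2)) hk.le (neg_pos.2 hneg).le
        (fun y hy => (hs.hasDerivAt_second_deriv hy).fun_neg) hgrow hx
    rw [div_le_iff₀ hk]
    linarith [sq_nonneg (h x)]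
  obtain ⟨x, hhx, hx⟩ := ((hlim.eventually_gt_atTop 0).and (eventually_ge_atTop a)).exists
  exact (neg_pos.1 hhx).not_ge ((hs.mono hx).nonneg hk)

lemma deriv_mul_add_sq_nonpos (hk : 0 < k) (hs : IsSolutionFrom k a h g) :
    (k ^ 2 + 2 * h a) * g a + k * h a ^ 2 ≤ 0 := by
  by_contra! hpos
  set C := k ^ 2 + 2 * h a with hC
  have hderiv : ∀ x ≥ a, HasDerivAt (fun y => C * g y + k * h y ^ 2)
      (C * (k * g x + h x ^ 2) + k * (2 * h x * g x)) x := fun x hx =>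
    (((hs.hasDerivAt_deriv x hx).const_mul C).fun_add
      (((hs.hasDerivAt x hx).fun_pow 2).const_mul k)).congr_deriv (by norm_num)
  have hgrow : ∀ x ≥ a, k * (C * g x + k * h x ^ 2) ≤
      C * (k * g x + h x ^ 2) + k * (2 * h x * g x) := fun x hx => by
    have hlower := mul_nonneg ((hs.mono hx).nonneg hk) ((hs.mono hx).second_deriv_nonneg hk)
    have hanti := mul_nonneg (sub_nonneg.2 (hs.antitoneOn hk self_mem_Ici hx hx))
      (sq_nonneg (h x))
    rw [hC]
    linarith
  have hbounded : ∀ x ≥ a, C * g x + k * h x ^ 2 ≤ k * h a ^ 2 := fun x hx => by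
    have hhx := (hs.mono hx).nonneg hk
    have hC_nonneg : 0 ≤ C := by have := hs.nonneg hk; positivity
    have hsq : h x ^ 2 ≤ h a ^ 2 :=
      pow_le_pow_left₀ hhx (hs.antitoneOn hk self_mem_Ici hx hx) 2
    have := mul_nonpos_of_nonneg_of_nonpos hC_nonneg ((hs.mono hx).deriv_nonpos hk)
    linarith [mul_le_mul_of_nonneg_left hsq hk.le]
  have hlim : Tendsto (fun x => C * g x + k * h x ^ 2) atTop atTop :=
    tendsto_atTop_of_mul_le_hasDerivAt hk hpos hderiv hgrow
  obtain ⟨x, hlarge, hx⟩ :=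
    ((hlim.eventually_gt_atTop (k * h a ^ 2)).and (eventually_ge_atTop a)).exists
  exact hlarge.not_ge (hbounded x hx)

lemma pos_of_le (hk : 0 < k) (hs : IsSolutionFrom k a h g) (ha : 0 < h a) (hx : a ≤ x) :
    0 < h x := by
  have hdecay : ∀ y ≥ a, -(h a / k) * h y ≤ g y := fun y hy => by
    have hsecond := (hs.mono hy).second_deriv_nonneg hk
    have hsq : h y * h y ≤ h a * h y :=
      mul_le_mul_of_nonneg_right (hs.antitoneOn hk self_mem_Ici hy hy) ((hs.mono hy).nonneg hk)
    rw [neg_mul, div_mul_eq_mul_div, neg_le, le_div_iff₀ hk]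
    linarith
  exact (mul_pos ha (Real.exp_pos _)).trans_le
    (mul_exp_le_of_mul_le_hasDerivAt hs.hasDerivAt hdecay hx)

lemma neg_deriv_div_sq_le (hk : 0 < k) (hs : IsSolutionFrom k a h g) (ha : 0 < h a) :
    -g a / h a ^ 2 ≤ k⁻¹ := by
  rw [div_le_iff₀ (pow_pos ha 2), inv_mul_eq_div, le_div_iff₀ hk]
  linarith [hs.second_deriv_nonneg hk]

lemma le_neg_deriv_div_sq (hk : 0 < k) (hs : IsSolutionFrom k a h g) (ha : 0 < h a) :
    k / (k ^ 2 + 2 * h a) ≤ -g a / h a ^ 2 := by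
  rw [div_le_div_iff₀ (by positivity) (pow_pos ha 2)]
  linarith [hs.deriv_mul_add_sq_nonpos hk]

lemma hasDerivAt_inv (hk : 0 < k) (hs : IsSolutionFrom k a h g) (ha : 0 < h a) (hx : a ≤ x) :
    HasDerivAt (fun y => (h y)⁻¹) (-g x / h x ^ 2) x :=
  (hs.hasDerivAt x hx).fun_inv (hs.pos_of_le hk ha hx).ne'

lemma tendsto_zero (hk : 0 < k) (hs : IsSolutionFrom k a h g) (ha : 0 < h a) :
    Tendsto h atTop (nhds 0) := by
  have hinv : Tendsto (fun x => (h x)⁻¹) atTop atTop := by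
    refine tendsto_atTop_of_le_hasDerivAt_s11 (c := k / (k ^ 2 + 2 * h a)) (by positivity)
      (fun x hx => hs.hasDerivAt_inv hk ha hx) (fun x hx => ?_)
    have hhx : 0 < h x := hs.pos_of_le hk ha hx
    refine le_trans ?_ ((hs.mono hx).le_neg_deriv_div_sq hk hhx)
    gcongr
    exact hs.antitoneOn hk self_mem_Ici hx hx
  exact hinv.inv_tendsto_atTop.congr fun x => inv_inv (h x)

lemma tendsto_neg_deriv_div_sq (hk : 0 < k) (hs : IsSolutionFrom k a h g) (ha : 0 < h a) :
    Tendsto (fun x => -g x / h x ^ 2) atTop (nhds k⁻¹) := by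
  have hlower : Tendsto (fun x => k / (k ^ 2 + 2 * h x)) atTop (nhds k⁻¹) := by
    rw [show k⁻¹ = k / (k ^ 2 + 2 * 0) by field_simp; ring]
    exact tendsto_const_nhds.div (((hs.tendsto_zero hk ha).const_mul 2).const_add (k ^ 2))
      (by positivity)
  refine tendsto_of_tendsto_of_tendsto_of_le_of_le' hlower tendsto_const_nhds ?_ ?_
  · filter_upwards [eventually_ge_atTop a] with x hx
    exact (hs.mono hx).le_neg_deriv_div_sq hk (hs.pos_of_le hk ha hx)
  · filter_upwards [eventually_ge_atTop a] with x hx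
    exact (hs.mono hx).neg_deriv_div_sq_le hk (hs.pos_of_le hk ha hx)

lemma tendsto_id_mul (hk : 0 < k) (hs : IsSolutionFrom k a h g) (ha : 0 < h a) :
    Tendsto (fun x => x * h x) atTop (nhds k) := by
  have hdiv : Tendsto (fun x => (h x)⁻¹ / x) atTop (nhds k⁻¹) :=
    tendsto_div_self_of_tendsto_hasDerivAt
      ((eventually_ge_atTop a).mono fun x hx => hs.hasDerivAt_inv hk ha hx)
      (hs.tendsto_neg_deriv_div_sq hk ha)
  simpa only [inv_div, div_inv_eq_mul, inv_inv] using hdiv.inv₀ (inv_ne_zero hk.ne')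

end IsSolutionFrom

theorem hSol_first_order_asymptotics_general {k a : ℝ} (hk : 0 < k) (h : ℝ → ℝ)
    (hf1 : DifferentiableOn ℝ h (Ici a))
    (hf2 : DifferentiableOn ℝ (derivWithin h (Ici a)) (Ici a))
    (hODE : ∀ x ∈ Ici a, derivWithin (derivWithin h (Ici a)) (Ici a) x
      - k * derivWithin h (Ici a) x = h x ^ 2)
    (hne : ∃ x ∈ Ici a, h x ≠ 0) :
    Tendsto (fun x => x * h x) atTop (nhds k) := by
  obtain ⟨x, hx, hhx⟩ := hne
  have hne_right : ∀ᶠ y in nhdsWithin x (Ioi x), h y ≠ 0 :=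
    ((hf1 x hx).continuousWithinAt.eventually_ne hhx).filter_mono
      (nhdsWithin_mono x (Ioi_subset_Ici hx))
  obtain ⟨y, hhy, hxy⟩ := (hne_right.and self_mem_nhdsWithin).exists
  have hs : IsSolutionFrom k y h (derivWithin h (Ici a)) :=
    isSolutionFrom_derivWithin (lt_of_le_of_lt hx hxy) hf1 hf2 hODE
  exact hs.tendsto_id_mul hk ((hs.nonneg hk).lt_of_ne' hhy)

/-- First-order asymptotics of solutions of `h'' - 2h' = h²` on `[0,∞)`:
any twice differentiable solution which is not identically zero satisfies
`x · h(x) → 2` as `x → ∞`, i.e. `h(x) ∼ 2/x`.  Derivatives on `[0,∞)` are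
formalised as derivatives within `Set.Ici 0`. -/
theorem hSol_first_order_asymptotics (h : ℝ → ℝ)
    (hf1 : DifferentiableOn ℝ h (Set.Ici 0))
    (hf2 : DifferentiableOn ℝ (derivWithin h (Set.Ici 0)) (Set.Ici 0))
    (hODE : ∀ x ∈ Set.Ici (0 : ℝ),
      derivWithin (derivWithin h (Set.Ici 0)) (Set.Ici 0) x
        - 2 * derivWithin h (Set.Ici 0) x = (h x) ^ 2)
    (hne : ∃ x ∈ Set.Ici (0 : ℝ), h x ≠ 0) :
    Filter.Tendsto (fun x => x * h x) Filter.atTop (nhds 2) :=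
  hSol_first_order_asymptotics_general two_pos h hf1 hf2 hODE hne
end

section
/- For every a ∈ (0,1) and every 0 < c < C < ∞ there exists δ > 0 such that the following holds: for every T > 1 and every nonnegative random variable X (on any probability space) satisfying e^{−δ}/(1−λ) ≤ E[e^{λX}] ≤ e^{δ}/(1−λ) for every λ ∈ [1 − C/T, 1 − c/T], one has P( (1−a)T ≤ X ≤ (1+a)T ) ≥ δ · a · T · exp( −(1+a) T ). -/
open MeasureTheory

/-!
Write `λ = 1 - (c + t) / T`. Under the measure `μ` tilted by `e^{(1 - c / T) X}`, the variable
`X / T` has a law on `[0, ∞)` whose Laplace transform is uniformly close, for `t ∈ [0, C - c]`, to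
the transform `c / (c + t)` of the exponential law of rate `c`. Since `t ↦ e^{-ty}` is an analytic
curve of bounded functions of `y` for `t > 0`, a closed subspace containing `e^{-ty}` for `t` in an
interval contains it for all `t > 0`; with the constants it then contains, by Weierstrass
approximation in the variable `e^{-y}`, every continuous function with a limit at infinity. Hence
closeness on the window forces the tilted law to charge the `a`-ball around `1`. On the event
`|X / T - 1| ≤ a` the tilt costs at most a factor `e^{(1 + a) T}`.
-/

open Filter Set ProbabilityTheory
open scoped Topology NNReal BoundedContinuousFunction

/-- The decaying exponential `y ↦ e^{-ty}` as a bounded continuous function on `[0, ∞)`. The rate is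
a nonnegative real so that the function is bounded, also for `t = 0`. -/
noncomputable def decayExp (t : ℝ≥0) : ℝ≥0 →ᵇ ℝ :=
  .ofNormedAddCommGroup (fun y => Real.exp (-(t * y))) (by fun_prop) 1 fun y => by
    rw [Real.norm_eq_abs, Real.abs_exp, Real.exp_le_one_iff]
    exact neg_nonpos.2 (by positivity)

@[simp]
lemma decayExp_apply (t y : ℝ≥0) : decayExp t y = Real.exp (-(t * y)) := rfl

lemma abs_pow_div_factorial_mul_exp_neg_le {t : ℝ} (ht : 0 < t) (n : ℕ) (y : ℝ≥0) :
    |(-(y : ℝ)) ^ n / n.factorial * Real.exp (-(t * y))| ≤ t⁻¹ ^ n := by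
  have hexp : (t * y) ^ n / n.factorial ≤ Real.exp (t * y) :=
    Real.pow_div_factorial_le_exp _ (by positivity) n
  rw [abs_mul, abs_div, abs_pow, abs_neg, NNReal.abs_eq, Nat.abs_cast, Real.abs_exp, Real.exp_neg,
    ← div_eq_mul_inv, div_le_iff₀ (Real.exp_pos _)]
  calc (y : ℝ) ^ n / n.factorial = t⁻¹ ^ n * ((t * y) ^ n / n.factorial) := by
        rw [mul_pow, inv_pow]
        field_simp
    _ ≤ t⁻¹ ^ n * Real.exp (t * y) := by gcongr

/-- The `n`-th Taylor coefficient `y ↦ (-y)ⁿ / n! · e^{-ty}` of `s ↦ decayExp s` at the rate `t`.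
It is unbounded for `t = 0` and `n > 0`, hence the positivity argument. -/
noncomputable def decayExpCoeff {t : ℝ} (ht : 0 < t) (n : ℕ) : ℝ≥0 →ᵇ ℝ :=
  .ofNormedAddCommGroup (fun y => (-(y : ℝ)) ^ n / n.factorial * Real.exp (-(t * y)))
    (by fun_prop) (t⁻¹ ^ n) (abs_pow_div_factorial_mul_exp_neg_le ht n)

@[simp]
lemma decayExpCoeff_apply {t : ℝ} (ht : 0 < t) (n : ℕ) (y : ℝ≥0) :
    decayExpCoeff ht n y = (-(y : ℝ)) ^ n / n.factorial * Real.exp (-(t * y)) := rfl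

lemma norm_decayExpCoeff_le {t : ℝ} (ht : 0 < t) (n : ℕ) : ‖decayExpCoeff ht n‖ ≤ t⁻¹ ^ n :=
  BoundedContinuousFunction.norm_ofNormedAddCommGroup_le _ (by positivity) _

lemma hasSum_pow_smul_decayExpCoeff {t h : ℝ} (ht : 0 < t) (hh : |h| < t) :
    HasSum (fun n => h ^ n • decayExpCoeff ht n) (decayExp (t + h).toNNReal) := by
  have hsummable : Summable fun n => h ^ n • decayExpCoeff ht n := by
    refine .of_norm_bounded (summable_geometric_of_lt_one (r := |h| / t) (by positivity)
      ((div_lt_one ht).2 hh)) fun n => ?_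
    rw [norm_smul, norm_pow, Real.norm_eq_abs, div_eq_mul_inv, mul_pow]
    gcongr
    exact norm_decayExpCoeff_le ht n
  convert hsummable.hasSum using 1
  ext y
  have hexpand : HasSum (fun n => h ^ n * decayExpCoeff ht n y)
      (Real.exp (-(h * y)) * Real.exp (-(t * y))) := by
    have hexp := NormedSpace.expSeries_div_hasSum_exp (-(h * y))
    rw [← Real.exp_eq_exp_ℝ] at hexp
    refine (hexp.mul_right _).congr_fun fun n => ?_
    rw [decayExpCoeff_apply, ← mul_neg h, mul_pow]
    ring
  rw [decayExp_apply, Real.coe_toNNReal _ (by linarith [neg_abs_le h])]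
  have heval := hsummable.hasSum.mapL (BoundedContinuousFunction.evalCLM ℝ y)
  rw [show -((t + h) * (y : ℝ)) = -(h * y) + -(t * y) by ring, Real.exp_add]
  exact hexpand.unique heval

lemma analyticAt_decayExp_toNNReal {t : ℝ} (ht : 0 < t) :
    AnalyticAt ℝ (fun s : ℝ => decayExp s.toNNReal) t := by
  refine ⟨fun n => ContinuousMultilinearMap.mkPiRing ℝ (Fin n) (decayExpCoeff ht n),
    hasFPowerSeriesAt_iff.2 ?_⟩
  filter_upwards [Metric.ball_mem_nhds (0 : ℝ) ht] with h hh
  rw [mem_ball_zero_iff, Real.norm_eq_abs] at hh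
  simpa [FormalMultilinearSeries.coeff] using hasSum_pow_smul_decayExpCoeff ht hh

lemma mem_of_analyticOnNhd_of_accPt {E : Type*} [NormedAddCommGroup E] [NormedSpace ℝ E]
    {V : Submodule ℝ E} (hV : IsClosed (V : Set E)) {f : ℝ → E} {U : Set ℝ}
    (hf : AnalyticOnNhd ℝ f U) (hU : IsPreconnected U) {x : ℝ} (hx : x ∈ U)
    (hacc : AccPt x (𝓟 {t | f t ∈ V})) {t : ℝ} (ht : t ∈ U) : f t ∈ V := by
  -- Membership in `V` is vanishing in `E ⧸ V`, where the identity theorem applies.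
  have hanalytic : AnalyticOnNhd ℝ (V.mkQL ∘ f) U := fun t ht =>
    (V.mkQL.analyticAt _).comp (hf t ht)
  have hfreq : ∃ᶠ t in 𝓝[≠] x, (V.mkQL ∘ f) t = 0 := by
    simpa [and_comm] using accPt_iff_frequently_nhdsNE.1 hacc
  simpa using hanalytic.eqOn_zero_of_preconnected_of_frequently_eq_zero hU hx hfreq ht

lemma decayExp_mem_closure_span {S : Set ℝ≥0} {l : ℝ≥0} (hl0 : 0 < l) (hl : AccPt l (𝓟 S))
    {q : ℝ≥0} (hq : 0 < q) :
    decayExp q ∈ (Submodule.span ℝ (decayExp '' S)).topologicalClosure := by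
  set V := (Submodule.span ℝ (decayExp '' S)).topologicalClosure
  have hacc : AccPt (l : ℝ) (𝓟 {t : ℝ | decayExp t.toNNReal ∈ V}) := by
    refine (hl.map NNReal.continuous_coe.continuousAt NNReal.coe_injective).mono ?_
    rw [map_principal, principal_mono]
    rintro _ ⟨t, ht, rfl⟩
    rw [mem_ofPred_eq, Real.toNNReal_coe]
    exact Submodule.le_topologicalClosure _ (Submodule.subset_span (mem_image_of_mem _ ht))
  simpa using mem_of_analyticOnNhd_of_accPt (Submodule.isClosed_topologicalClosure _)
    (fun t ht => analyticAt_decayExp_toNNReal ht) isPreconnected_Ioi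
    (show (l : ℝ) ∈ Ioi 0 from hl0) hacc (show (q : ℝ) ∈ Ioi 0 from hq)

lemma mem_closure_span_range_decayExp_natCast {f : ℝ≥0 →ᵇ ℝ} {b : ℝ} (hf : Tendsto f atTop (𝓝 b)) :
    f ∈ (Submodule.span ℝ (range fun n : ℕ => decayExp n)).topologicalClosure := by
  -- In the variable `x = e^{-y}` the exponentials `e^{-ny}` are the monomials `x ^ n`.
  set φ : ℝ → ℝ := Function.update (fun x => f (-Real.log x).toNNReal) 0 b with hφ_def
  have hφ : ContinuousOn φ (Icc 0 1) := by
    refine continuousOn_update_iff.2 ⟨?_, fun _ => ?_⟩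
    · have hlog : ContinuousOn Real.log (Icc 0 1 \ {0}) :=
        Real.continuousOn_log.mono fun x hx => hx.2
      exact f.continuous.comp_continuousOn (continuous_real_toNNReal.comp_continuousOn hlog.neg)
    · have hlog : Tendsto (fun x => (-Real.log x).toNNReal) (𝓝[≠] 0) atTop :=
        tendsto_real_toNNReal_atTop.comp (tendsto_neg_atBot_atTop.comp Real.tendsto_log_nhdsNE_zero)
      exact (hf.comp hlog).mono_left (nhdsWithin_mono _ fun x hx => hx.2)
  have hφ_exp (y : ℝ≥0) : φ (Real.exp (-y)) = f y := by
    simp [hφ_def]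
  refine Metric.mem_closure_iff.2 fun ε hε => ?_
  obtain ⟨p, hp⟩ := exists_polynomial_near_of_continuousOn 0 1 φ hφ (ε / 2) (half_pos hε)
  refine ⟨p.sum fun n r => r • decayExp n, Submodule.sum_mem _ fun n _ =>
    Submodule.smul_mem _ _ (Submodule.subset_span (mem_range_self n)), ?_⟩
  refine ((BoundedContinuousFunction.dist_le (half_pos hε).le).2 fun y => ?_).trans_lt
    (half_lt_self hε)
  have heval : p.eval (Real.exp (-y)) = (p.sum fun n r => r • decayExp n) y := by
    simp [Polynomial.eval_eq_sum, Polynomial.sum_def, ← Real.exp_nat_mul]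
  rw [dist_comm, Real.dist_eq, ← heval, ← hφ_exp]
  exact (hp _ ⟨(Real.exp_pos _).le, Real.exp_le_one_iff.2 (neg_nonpos.2 y.2)⟩).le

lemma mem_closure_span_decayExp {S : Set ℝ≥0} (h0 : 0 ∈ S) {l : ℝ≥0} (hl0 : 0 < l)
    (hl : AccPt l (𝓟 S)) {f : ℝ≥0 →ᵇ ℝ} {b : ℝ} (hf : Tendsto f atTop (𝓝 b)) :
    f ∈ (Submodule.span ℝ (decayExp '' S)).topologicalClosure := by
  refine Submodule.topologicalClosure_minimal _ (Submodule.span_le.2 ?_)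
    (Submodule.isClosed_topologicalClosure _) (mem_closure_span_range_decayExp_natCast hf)
  rintro _ ⟨n, rfl⟩
  rcases n.eq_zero_or_pos with rfl | hn
  · exact Submodule.le_topologicalClosure _ (Submodule.subset_span ⟨0, h0, by simp⟩)
  · exact decayExp_mem_closure_span hl0 hl (by exact_mod_cast hn)

lemma tendsto_integral_of_mem_closure_span {α ι : Type*} [TopologicalSpace α] [MeasurableSpace α]
    [OpensMeasurableSpace α] {𝓕 : Filter ι} {ν : ι → ProbabilityMeasure α}
    {ρ : Measure α} [IsProbabilityMeasure ρ] {𝒢 : Set (α →ᵇ ℝ)}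
    (h𝒢 : ∀ g ∈ 𝒢, Tendsto (fun i => ∫ y, g y ∂(ν i : Measure α)) 𝓕 (𝓝 (∫ y, g y ∂ρ)))
    {f : α →ᵇ ℝ} (hf : f ∈ (Submodule.span ℝ 𝒢).topologicalClosure) :
    Tendsto (fun i => ∫ y, f y ∂(ν i : Measure α)) 𝓕 (𝓝 (∫ y, f y ∂ρ)) := by
  have hspan (g : α →ᵇ ℝ) (hg : g ∈ Submodule.span ℝ 𝒢) :
      Tendsto (fun i => ∫ y, g y ∂(ν i : Measure α)) 𝓕 (𝓝 (∫ y, g y ∂ρ)) := by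
    induction hg using Submodule.span_induction with
    | mem g hg => exact h𝒢 g hg
    | zero => simp [tendsto_const_nhds]
    | add g h _ _ hg hh =>
      simpa [integral_add (BoundedContinuousFunction.integrable _ g)
        (BoundedContinuousFunction.integrable _ h)] using hg.add hh
    | smul r g _ hg => simpa [integral_const_mul] using hg.const_mul r
  have hdist (μ : Measure α) [IsProbabilityMeasure μ] (g : α →ᵇ ℝ) :
      |∫ y, f y ∂μ - ∫ y, g y ∂μ| ≤ dist f g := by
    rw [← integral_sub (f.integrable μ) (g.integrable μ), dist_eq_norm]
    exact (f - g).norm_integral_le_norm μ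
  rw [Metric.tendsto_nhds]
  intro ε hε
  obtain ⟨g, hg, hfg⟩ := Metric.mem_closure_iff.1 hf (ε / 3) (by positivity)
  filter_upwards [Metric.tendsto_nhds.1 (hspan g hg) (ε / 3) (by positivity)] with i hi
  rw [Real.dist_eq, abs_lt] at hi ⊢
  have hν := abs_lt.1 ((hdist (ν i) g).trans_lt hfg)
  have hρ := abs_lt.1 ((hdist ρ g).trans_lt hfg)
  constructor <;> linarith [hν.1, hν.2, hρ.1, hρ.2]

lemma exists_hasCompactSupport_le_indicator_integral_pos {α : Type*} [TopologicalSpace α]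
    [RegularSpace α] [LocallyCompactSpace α] [MeasurableSpace α] [OpensMeasurableSpace α]
    (ρ : Measure α) [IsFiniteMeasureOnCompacts ρ] [ρ.IsOpenPosMeasure] {U : Set α}
    (hU : IsOpen U) (hU' : U.Nonempty) :
    ∃ f : α →ᵇ ℝ, HasCompactSupport f ∧ (∀ y, f y ≤ U.indicator 1 y) ∧ 0 < ∫ y, f y ∂ρ := by
  obtain ⟨x, hx⟩ := hU'
  obtain ⟨f, hf_one, hf_zero, hf_supp, hf_mem⟩ := exists_continuous_one_zero_of_isCompact
    isCompact_singleton hU.isClosed_compl (disjoint_singleton_left.2 (not_not.2 hx))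
  refine ⟨.ofNormedAddCommGroup f f.continuous 1 fun y => ?_, hf_supp, fun y => ?_,
    f.continuous.integral_pos_of_hasCompactSupport_nonneg_nonzero hf_supp
      (fun y => (hf_mem y).1) (x := x) (by simp [hf_one rfl])⟩
  · rw [Real.norm_of_nonneg (hf_mem y).1]
    exact (hf_mem y).2
  · by_cases hy : y ∈ U
    · simpa [hy] using (hf_mem y).2
    · simpa [hy] using (hf_zero hy).le

lemma exists_pos_forall_le_measureReal {S : Set ℝ≥0} (h0 : 0 ∈ S) {l : ℝ≥0} (hl0 : 0 < l)
    (hl : AccPt l (𝓟 S)) (ρ : Measure ℝ≥0) [IsProbabilityMeasure ρ] [ρ.IsOpenPosMeasure]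
    {U : Set ℝ≥0} (hU : IsOpen U) (hU' : U.Nonempty) :
    ∃ η > 0, ∀ ν : ProbabilityMeasure ℝ≥0,
      (∀ t ∈ S, |∫ y, decayExp t y ∂(ν : Measure ℝ≥0) - ∫ y, decayExp t y ∂ρ| ≤ η) →
      η ≤ (ν : Measure ℝ≥0).real U := by
  obtain ⟨f, hf_supp, hfU, hfρ⟩ := exists_hasCompactSupport_le_indicator_integral_pos ρ hU hU'
  have hf_zero : Tendsto f atTop (𝓝 0) :=
    hf_supp.is_zero_at_infty.mono_left atTop_le_cocompact
  by_contra! hcontra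
  choose ν hν hνU using fun n : ℕ => hcontra (1 / (n + 1)) Nat.one_div_pos_of_nat
  have hlim : Tendsto (fun n => ∫ y, f y ∂(ν n : Measure ℝ≥0)) atTop (𝓝 (∫ y, f y ∂ρ)) := by
    refine tendsto_integral_of_mem_closure_span ?_ (mem_closure_span_decayExp h0 hl0 hl hf_zero)
    rintro _ ⟨t, ht, rfl⟩
    exact tendsto_iff_dist_tendsto_zero.2 (squeeze_zero (fun _ => dist_nonneg)
      (fun n => hν n t ht) tendsto_one_div_add_atTop_nhds_zero_nat)
  have hle (n : ℕ) : ∫ y, f y ∂(ν n : Measure ℝ≥0) ≤ 1 / ((n : ℝ) + 1) := by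
    refine le_trans ?_ (hνU n).le
    rw [← integral_indicator_one hU.measurableSet]
    exact integral_mono (f.integrable _)
      ((integrable_const 1).indicator hU.measurableSet) hfU
  exact hfρ.not_ge (le_of_tendsto_of_tendsto' hlim tendsto_one_div_add_atTop_nhds_zero_nat hle)

/-- The exponential distribution of rate `c` on `[0, ∞)`; `expMeasure` lives on `ℝ`. -/
noncomputable def expMeasureNNReal (c : ℝ) : Measure ℝ≥0 := (expMeasure c).map Real.toNNReal

lemma isProbabilityMeasure_expMeasureNNReal {c : ℝ} (hc : 0 < c) :
    IsProbabilityMeasure (expMeasureNNReal c) :=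
  have := isProbabilityMeasure_expMeasure hc
  Measure.isProbabilityMeasure_map measurable_real_toNNReal.aemeasurable

lemma isOpenPosMeasure_expMeasureNNReal {c : ℝ} (hc : 0 < c) :
    (expMeasureNNReal c).IsOpenPosMeasure where
  open_pos U hU hU' h0 := by
    obtain ⟨y, hyU, hy0⟩ := (dense_compl_singleton (0 : ℝ≥0)).inter_open_nonempty U hU hU'
    have hopen : IsOpen (Ioi 0 ∩ Real.toNNReal ⁻¹' U) :=
      isOpen_Ioi.inter (hU.preimage continuous_real_toNNReal)
    have hnonempty : (Ioi 0 ∩ Real.toNNReal ⁻¹' U).Nonempty :=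
      ⟨y, NNReal.coe_pos.2 (pos_iff_ne_zero.2 hy0), by simpa using hyU⟩
    rw [expMeasureNNReal, Measure.map_apply measurable_real_toNNReal hU.measurableSet] at h0
    have hnull := (withDensity_apply_eq_zero (measurable_exponentialPDFReal c).ennreal_ofReal).1 h0
    refine hopen.measure_ne_zero volume hnonempty (measure_mono_null ?_ hnull)
    exact inter_subset_inter_left _ fun x hx =>
      (ENNReal.ofReal_pos.2 (exponentialPDFReal_pos hc hx)).ne'

lemma integral_decayExp_expMeasureNNReal {c : ℝ} (hc : 0 < c) (t : ℝ≥0) :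
    ∫ y, decayExp t y ∂expMeasureNNReal c = c / (c + t) := by
  have hdensity (x : ℝ) : (exponentialPDF c x).toReal • decayExp t x.toNNReal =
      (Ici 0).indicator (fun x => c * Real.exp (-(c + t) * x)) x := by
    by_cases hx : 0 ≤ x
    · rw [exponentialPDF_of_nonneg hx, ENNReal.toReal_ofReal (by positivity), decayExp_apply,
        Real.coe_toNNReal x hx, indicator_of_mem (mem_Ici.2 hx), smul_eq_mul, mul_assoc,
        ← Real.exp_add]
      ring_nf
    · rw [exponentialPDF_of_neg (not_le.1 hx), indicator_of_notMem (by simpa using hx)]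
      simp
  calc ∫ y, decayExp t y ∂expMeasureNNReal c
      = ∫ x, decayExp t x.toNNReal ∂expMeasure c :=
        integral_map measurable_real_toNNReal.aemeasurable
          (decayExp t).continuous.aestronglyMeasurable
    _ = ∫ x, (exponentialPDF c x).toReal • decayExp t x.toNNReal :=
        integral_withDensity_eq_integral_toReal_smul
          (measurable_exponentialPDFReal c).ennreal_ofReal
          (.of_forall fun _ => ENNReal.ofReal_lt_top) _
    _ = ∫ x in Ioi 0, c * Real.exp (-(c + t) * x) := by
        rw [integral_congr_ae (.of_forall hdensity), integral_indicator measurableSet_Ici,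
          integral_Ici_eq_integral_Ioi]
    _ = c / (c + t) := by
        rw [integral_const_mul, integral_exp_mul_Ioi (by linarith [t.2]), mul_zero, Real.exp_zero,
          neg_div_neg_eq, mul_one_div]

/-- The law of `X / T` on `[0, ∞)` under the exponentially tilted measure `e^{sX} μ / E[e^{sX}]`. -/
noncomputable def tiltedRescaledLaw {Ω : Type*} [MeasurableSpace Ω] (X : Ω → ℝ) (μ : Measure Ω)
    (s T : ℝ) : Measure ℝ≥0 :=
  (μ.tilted (s * X ·)).map fun ω => (X ω / T).toNNReal

lemma tilted_apply_le_of_forall_le {Ω : Type*} [MeasurableSpace Ω] {μ : Measure Ω} {f : Ω → ℝ}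
    {A : Set Ω} (hA : NullMeasurableSet A μ) {K : ℝ} (hK : ∀ᵐ ω ∂μ, ω ∈ A → f ω ≤ K) :
    μ.tilted f A ≤ ENNReal.ofReal (Real.exp K / ∫ ω, Real.exp (f ω) ∂μ) * μ A := by
  rw [Measure.tilted, withDensity_apply₀ _ hA, ← setLIntegral_const]
  refine lintegral_mono_ae ((ae_restrict_iff'₀ hA).2 ?_)
  filter_upwards [hK] with ω hω hωA
  gcongr
  exact hω hωA

section TiltedRescaledLaw

variable {Ω : Type*} [MeasurableSpace Ω] {μ : Measure Ω} {X : Ω → ℝ}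

lemma aemeasurable_tilted_toNNReal_div (hX : AEMeasurable X μ) (s T : ℝ) :
    AEMeasurable (fun ω => (X ω / T).toNNReal) (μ.tilted (s * X ·)) :=
  (hX.div_const T).real_toNNReal.mono_ac (tilted_absolutelyContinuous μ _)

lemma isProbabilityMeasure_tiltedRescaledLaw (hX : AEMeasurable X μ) {s : ℝ} (hs : 0 < mgf X μ s)
    (T : ℝ) : IsProbabilityMeasure (tiltedRescaledLaw X μ s T) := by
  have hint : Integrable (fun ω => Real.exp (s * X ω)) μ := .of_integral_ne_zero hs.ne'
  have : NeZero μ := ⟨fun h => by simp [h] at hs⟩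
  have := isProbabilityMeasure_tilted hint
  exact Measure.isProbabilityMeasure_map (aemeasurable_tilted_toNNReal_div hX s T)

lemma integral_decayExp_tiltedRescaledLaw (hX : AEMeasurable X μ) (hX0 : 0 ≤ᵐ[μ] X) (s : ℝ)
    {T : ℝ} (hT : 0 < T) (t : ℝ≥0) :
    ∫ y, decayExp t y ∂tiltedRescaledLaw X μ s T = mgf X μ (s - t / T) / mgf X μ s := by
  have hae : ∀ᵐ ω ∂μ.tilted (s * X ·),
      decayExp t (X ω / T).toNNReal = Real.exp (-(t / T) * X ω) := by
    filter_upwards [(tilted_absolutelyContinuous μ _).ae_le hX0] with ω hω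
    rw [decayExp_apply, Real.coe_toNNReal _ (div_nonneg hω hT.le)]
    ring_nf
  rw [tiltedRescaledLaw, integral_map (aemeasurable_tilted_toNNReal_div hX s T)
    (decayExp t).continuous.aestronglyMeasurable, integral_congr_ae hae, integral_exp_tilted]
  simp only [mgf, Pi.add_apply, sub_eq_add_neg, add_mul]

lemma ofReal_tiltedRescaledLaw_ball_mul_le (hX : AEMeasurable X μ) (hX0 : 0 ≤ᵐ[μ] X) {s : ℝ}
    (hs1 : s ≤ 1) (hs : 0 < mgf X μ s) {T : ℝ} (hT : 0 < T) (a : ℝ) :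
    ENNReal.ofReal ((tiltedRescaledLaw X μ s T).real (Metric.ball 1 a) * mgf X μ s *
      Real.exp (-(1 + a) * T)) ≤ μ {ω | (1 - a) * T ≤ X ω ∧ X ω ≤ (1 + a) * T} := by
  set E := {ω | (1 - a) * T ≤ X ω ∧ X ω ≤ (1 + a) * T}
  have hE : NullMeasurableSet E μ := hX.nullMeasurableSet_preimage measurableSet_Icc
  have hball : tiltedRescaledLaw X μ s T (Metric.ball 1 a) ≤ μ.tilted (s * X ·) E := by
    rw [tiltedRescaledLaw, Measure.map_apply_of_aemeasurable
      (aemeasurable_tilted_toNNReal_div hX s T) Metric.isOpen_ball.measurableSet]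
    refine measure_mono_ae ?_
    filter_upwards [(tilted_absolutelyContinuous μ _).ae_le hX0] with ω hω hωa
    have hdist : |X ω / T - 1| < a := by
      simpa [NNReal.dist_eq, Real.coe_toNNReal _ (div_nonneg hω hT.le)] using Metric.mem_ball.1 hωa
    rw [div_sub_one hT.ne', abs_div, abs_of_pos hT, div_lt_iff₀ hT, abs_lt] at hdist
    constructor <;> linarith
  have htilt : μ.tilted (s * X ·) E ≤
      ENNReal.ofReal (Real.exp ((1 + a) * T) / mgf X μ s) * μ E := by
    refine tilted_apply_le_of_forall_le hE ?_
    filter_upwards [hX0] with ω hω hωE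
    exact (mul_le_of_le_one_left hω hs1).trans hωE.2
  have hcancel :
      Real.exp ((1 + a) * T) / mgf X μ s * (mgf X μ s * Real.exp (-(1 + a) * T)) = 1 := by
    rw [← mul_assoc, div_mul_cancel₀ _ hs.ne', ← Real.exp_add, neg_mul, add_neg_cancel,
      Real.exp_zero]
  calc ENNReal.ofReal ((tiltedRescaledLaw X μ s T).real (Metric.ball 1 a) * mgf X μ s *
        Real.exp (-(1 + a) * T))
      = ENNReal.ofReal ((tiltedRescaledLaw X μ s T).real (Metric.ball 1 a)) *
          ENNReal.ofReal (mgf X μ s * Real.exp (-(1 + a) * T)) := by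
        rw [mul_assoc, ENNReal.ofReal_mul measureReal_nonneg]
    _ ≤ ENNReal.ofReal (Real.exp ((1 + a) * T) / mgf X μ s) * μ E *
          ENNReal.ofReal (mgf X μ s * Real.exp (-(1 + a) * T)) := by
        gcongr
        exact ENNReal.ofReal_toReal_le.trans (hball.trans htilt)
    _ = μ E := by
        rw [mul_right_comm, ← ENNReal.ofReal_mul (by positivity), hcancel, ENNReal.ofReal_one,
          one_mul]

end TiltedRescaledLaw

lemma abs_div_sub_div_le_exp_two_mul_sub_one {δ u v u' v' : ℝ} (hδ : 0 ≤ δ) (hu' : 0 < u')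
    (huv' : u' ≤ v')
    (hu : u ∈ Icc (Real.exp (-δ) * u') (Real.exp δ * u'))
    (hv : v ∈ Icc (Real.exp (-δ) * v') (Real.exp δ * v')) :
    |u / v - u' / v'| ≤ Real.exp (2 * δ) - 1 := by
  have hv' : 0 < v' := hu'.trans_le huv'
  have hu0 : 0 < u := lt_of_lt_of_le (by positivity) hu.1
  have hv0 : 0 < v := lt_of_lt_of_le (by positivity) hv.1
  have hratio_le_one : u' / v' ≤ 1 := (div_le_one hv').2 huv'
  have hratio_nonneg : 0 ≤ u' / v' := by positivity
  have hexp : Real.exp (-(2 * δ)) + Real.exp (2 * δ) ≥ 2 := by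
    linarith [Real.add_one_le_exp (-(2 * δ)), Real.add_one_le_exp (2 * δ)]
  have hexp_one : 1 ≤ Real.exp (2 * δ) := Real.one_le_exp (by positivity)
  have hupper : u / v ≤ Real.exp (2 * δ) * (u' / v') := by
    calc u / v ≤ Real.exp δ * u' / (Real.exp (-δ) * v') := by
          gcongr
          exacts [hu.2, hv.1]
      _ = Real.exp (2 * δ) * (u' / v') := by
          rw [mul_div_mul_comm, ← Real.exp_sub]
          ring_nf
  have hlower : Real.exp (-(2 * δ)) * (u' / v') ≤ u / v := by
    calc Real.exp (-(2 * δ)) * (u' / v') = Real.exp (-δ) * u' / (Real.exp δ * v') := by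
          rw [mul_div_mul_comm, ← Real.exp_sub]
          ring_nf
      _ ≤ u / v := by
          gcongr
          exacts [hu.1, hv.2]
  rw [abs_le]
  constructor <;> nlinarith

lemma mgf_one_sub_div_mem_Icc {Ω : Type*} [MeasurableSpace Ω] {μ : Measure Ω} {X : Ω → ℝ}
    {c C δ T : ℝ} (hT : 0 < T)
    (hmgf : ∀ lam ∈ Icc (1 - C / T) (1 - c / T),
      mgf X μ lam ∈ Icc (Real.exp (-δ) / (1 - lam)) (Real.exp δ / (1 - lam)))
    {u : ℝ} (hcu : c ≤ u) (huC : u ≤ C) :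
    mgf X μ (1 - u / T) ∈ Icc (Real.exp (-δ) * (T / u)) (Real.exp δ * (T / u)) := by
  simpa [div_div_eq_mul_div, mul_div_assoc] using hmgf (1 - u / T) ⟨by gcongr, by gcongr⟩

lemma abs_integral_decayExp_sub_le {Ω : Type*} [MeasurableSpace Ω] {μ : Measure Ω} {X : Ω → ℝ}
    (hX : AEMeasurable X μ) (hX0 : 0 ≤ᵐ[μ] X) {c C δ T : ℝ} (hc : 0 < c) (hδ : 0 ≤ δ) (hT : 0 < T)
    (hmgf : ∀ lam ∈ Icc (1 - C / T) (1 - c / T),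
      mgf X μ lam ∈ Icc (Real.exp (-δ) / (1 - lam)) (Real.exp δ / (1 - lam)))
    {t : ℝ≥0} (ht : c + t ≤ C) :
    |∫ y, decayExp t y ∂tiltedRescaledLaw X μ (1 - c / T) T -
      ∫ y, decayExp t y ∂expMeasureNNReal c| ≤ Real.exp (2 * δ) - 1 := by
  have hct : c ≤ c + t := le_add_of_nonneg_right t.2
  have hratio : c / (c + t) = T / (c + t) / (T / c) := by
    field_simp
  rw [integral_decayExp_tiltedRescaledLaw hX hX0 _ hT, integral_decayExp_expMeasureNNReal hc,
    sub_sub, ← add_div, hratio]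
  exact abs_div_sub_div_le_exp_two_mul_sub_one hδ (div_pos hT (hc.trans_le hct)) (by gcongr)
    (mgf_one_sub_div_mem_Icc hT hmgf hct ht) (mgf_one_sub_div_mem_Icc hT hmgf le_rfl (hct.trans ht))

lemma exists_pos_exp_two_mul_sub_one_le_mul_exp_le (K : ℝ) {η : ℝ} (hη : 0 < η) :
    ∃ δ > 0, Real.exp (2 * δ) - 1 ≤ η ∧ δ * K * Real.exp δ ≤ η := by
  have hexp : ∀ᶠ δ in 𝓝[>] (0 : ℝ), Real.exp (2 * δ) - 1 < η :=
    (Continuous.tendsto' (by fun_prop) 0 0 (by simp)).mono_left nhdsWithin_le_nhds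
      |>.eventually_lt_const hη
  have hmul : ∀ᶠ δ in 𝓝[>] (0 : ℝ), δ * K * Real.exp δ < η :=
    (Continuous.tendsto' (by fun_prop) 0 0 (by simp)).mono_left nhdsWithin_le_nhds
      |>.eventually_lt_const hη
  obtain ⟨δ, hδ_exp, hδ_mul, hδ⟩ := (hexp.and (hmul.and self_mem_nhdsWithin)).exists
  exact ⟨δ, hδ, hδ_exp.le, hδ_mul.le⟩

lemma accPt_principal_Icc_right {α : Type*} [LinearOrder α] [TopologicalSpace α] [OrderTopology α]
    [DenselyOrdered α] {a b : α} (hab : a < b) : AccPt b (𝓟 (Icc a b)) := by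
  rw [accPt_principal_iff_nhdsWithin, Icc_sdiff_right, nhdsWithin_Ico_eq_nhdsLT hab]
  exact nhdsLT_neBot_of_exists_lt ⟨a, hab⟩

theorem finitary_tauberian_general {a c C : ℝ} (ha : 0 < a) (hc : 0 < c) (hcC : c < C) :
    ∃ δ : ℝ, 0 < δ ∧ ∀ T : ℝ, 0 < T →
      ∀ (Ω : Type*) [MeasurableSpace Ω] (μ : Measure Ω) (X : Ω → ℝ),
      AEMeasurable X μ → 0 ≤ᵐ[μ] X →
      (∀ lam ∈ Icc (1 - C / T) (1 - c / T),
        mgf X μ lam ∈ Icc (Real.exp (-δ) / (1 - lam)) (Real.exp δ / (1 - lam))) →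
      ENNReal.ofReal (δ * a * T * Real.exp (-(1 + a) * T)) ≤
        μ {ω | (1 - a) * T ≤ X ω ∧ X ω ≤ (1 + a) * T} := by
  have := isProbabilityMeasure_expMeasureNNReal hc
  have := isOpenPosMeasure_expMeasureNNReal hc
  have hlen : 0 < (C - c).toNNReal := Real.toNNReal_pos.2 (sub_pos.2 hcC)
  obtain ⟨η, hη, hball⟩ := exists_pos_forall_le_measureReal (left_mem_Icc.2 zero_le) hlen
    (accPt_principal_Icc_right hlen) (expMeasureNNReal c) Metric.isOpen_ball
    (Metric.nonempty_ball (x := (1 : ℝ≥0)).2 ha)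
  obtain ⟨δ, hδ, hδ_tilt, hδ_mass⟩ := exists_pos_exp_two_mul_sub_one_le_mul_exp_le (a * c) hη
  refine ⟨δ, hδ, fun T hT Ω _ μ X hX hX0 hmgf => ?_⟩
  set Z := mgf X μ (1 - c / T)
  have hZ : Real.exp (-δ) * (T / c) ≤ Z := (mgf_one_sub_div_mem_Icc hT hmgf le_rfl hcC.le).1
  have hZ0 : 0 < Z := lt_of_lt_of_le (by positivity) hZ
  have := isProbabilityMeasure_tiltedRescaledLaw hX hZ0 T
  have hmass : η ≤ (tiltedRescaledLaw X μ (1 - c / T) T).real (Metric.ball 1 a) :=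
    hball ⟨_, this⟩ fun t ht => (abs_integral_decayExp_sub_le hX hX0 hc hδ.le hT hmgf
      (by linarith [(Real.le_toNNReal_iff_coe_le (sub_pos.2 hcC).le).1 ht.2])).trans hδ_tilt
  refine le_trans (ENNReal.ofReal_le_ofReal ?_) (ofReal_tiltedRescaledLaw_ball_mul_le hX hX0
    (sub_le_self _ (by positivity)) hZ0 hT a)
  refine mul_le_mul_of_nonneg_right ?_ (Real.exp_pos _).le
  calc δ * a * T = δ * (a * c) * Real.exp δ * (Real.exp (-δ) * (T / c)) := by
        rw [Real.exp_neg]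
        field_simp
    _ ≤ (tiltedRescaledLaw X μ (1 - c / T) T).real (Metric.ball 1 a) * Z := by
        gcongr
        exact hδ_mass.trans hmass

/-- Finitary Tauberian theorem: if the moment generating function of a
nonnegative random variable `X` agrees with that of an `Exponential(1)`
random variable within a factor `e^{±δ}` for all `λ ∈ [1 - C/T, 1 - c/T]`,
then `X` lies in `[(1-a)T, (1+a)T]` with probability at least
`δ a T e^{-(1+a)T}`. -/
theorem finitary_tauberian (a c C : ℝ) (ha0 : 0 < a) (ha1 : a < 1)
    (hc : 0 < c) (hcC : c < C) :
    ∃ δ : ℝ, 0 < δ ∧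
      ∀ T : ℝ, 1 < T →
      ∀ (Ω : Type) [MeasurableSpace Ω] (μ : Measure Ω), IsProbabilityMeasure μ →
      ∀ X : Ω → ℝ, Measurable X → (∀ ω, 0 ≤ X ω) →
      (∀ lam : ℝ, 1 - C / T ≤ lam → lam ≤ 1 - c / T →
        Real.exp (-δ) / (1 - lam) ≤ (∫ ω, Real.exp (lam * X ω) ∂μ) ∧
        (∫ ω, Real.exp (lam * X ω) ∂μ) ≤ Real.exp δ / (1 - lam)) →
      ENNReal.ofReal (δ * a * T * Real.exp (-(1 + a) * T)) ≤
        μ {ω | (1 - a) * T ≤ X ω ∧ X ω ≤ (1 + a) * T} := by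
  obtain ⟨δ, hδ, hmain⟩ := finitary_tauberian_general ha0 hc hcC
  exact ⟨δ, hδ, fun T hT Ω _ μ _ X hX hX0 hmgf => hmain T (one_pos.trans hT) Ω μ X
    hX.aemeasurable (.of_forall hX0) fun lam hlam => hmgf lam hlam.1 hlam.2⟩
end

section
/- Let d ∈ {1,2,3} and let β = (d − 6 + √(d² − 20d + 68))/2. Then β > 0 and β² + (6 − d)β = 8 − 2d. Moreover, if f : (0,∞) → ℝ is twice differentiable and satisfies β² x² f''(x) + (8−2d)( x f'(x) + f(x) ) = f(x)² for all x > 0, then the function w : (0,∞) → ℝ defined by w(r) = r^{−2} f(r^{−β}) is twice differentiable and satisfies w''(r) + ((d−1)/r) w'(r) = w(r)² for all r > 0. -/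
open Set

/-!
The family `r ↦ r ^ a • f (r ^ b)` is stable under differentiation: a derivative lowers `a` by one
and replaces `f` by the Euler-type expression `x ↦ a • f x + (b * x) • f' x`. Differentiating twice
turns the radial Laplacian into `r ^ (a - 2)` times an Euler operator in `x = r ^ b`. For `a = -2`,
`b = -β` the factor `r ^ (a - 2)` is `(r ^ a) ^ 2`, matching the quadratic nonlinearity, and the
coefficients of `f` and `x f'` are `8 - 2d` and `β² + (6 - d)β`; the quadratic equation for `β`
says exactly that these two coefficients agree.
-/

open scoped Topology

section PowerTransform

variable {E : Type*} [NormedAddCommGroup E] [NormedSpace ℝ E] {f : ℝ → E} {a b r : ℝ}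

/-- The self-similar change of variables sending `f` to `r ↦ r ^ a f(r ^ b)`, used for `r > 0`. -/
noncomputable def powerTransform (a b : ℝ) (f : ℝ → E) (r : ℝ) : E :=
  r ^ a • f (r ^ b)

/-- The radial part `w'' + ((d - 1) / r) w'` of the Laplacian on `ℝ ^ d`, for real `d`, so that
the dimension enters as a parameter only. It is meaningful at `r > 0`. -/
noncomputable def radialLaplacian (d : ℝ) (w : ℝ → E) (r : ℝ) : E :=
  deriv (deriv w) r + ((d - 1) / r) • deriv w r

theorem hasDerivAt_powerTransform {f' : E} (hr : 0 < r) (hf : HasDerivAt f f' (r ^ b)) :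
    HasDerivAt (powerTransform a b f) (r ^ (a - 1) • (a • f (r ^ b) + (b * r ^ b) • f')) r := by
  have hpow (p : ℝ) : HasDerivAt (fun s : ℝ ↦ s ^ p) (p * r ^ (p - 1)) r :=
    Real.hasDerivAt_rpow_const (Or.inl hr.ne')
  refine ((hpow a).smul (hf.scomp r (hpow b))).congr_deriv ?_
  simp only [Function.comp_apply, Real.rpow_sub_one hr.ne']
  module

theorem deriv_powerTransform (hr : 0 < r) (hf : DifferentiableAt ℝ f (r ^ b)) :
    deriv (powerTransform a b f) r =
      powerTransform (a - 1) b (fun x ↦ a • f x + (b * x) • deriv f x) r :=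
  (hasDerivAt_powerTransform hr hf.hasDerivAt).deriv

theorem hasDerivAt_deriv_powerTransform (hr : 0 < r)
    (hf : ∀ᶠ x in 𝓝 (r ^ b), DifferentiableAt ℝ f x)
    (hf' : DifferentiableAt ℝ (deriv f) (r ^ b)) :
    HasDerivAt (deriv (powerTransform a b f))
      (r ^ (a - 2) • ((b * r ^ b) ^ 2 • deriv (deriv f) (r ^ b)
        + (b * (2 * a + b - 1) * r ^ b) • deriv f (r ^ b) + (a * (a - 1)) • f (r ^ b))) r := by
  have hderiv : deriv (powerTransform a b f) =ᶠ[𝓝 r]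
      powerTransform (a - 1) b (fun x ↦ a • f x + (b * x) • deriv f x) := by
    have hcont : ContinuousAt (fun s : ℝ ↦ s ^ b) r :=
      Real.continuousAt_rpow_const r b (Or.inl hr.ne')
    filter_upwards [lt_mem_nhds hr, hcont.eventually hf] with s hs hfs
    exact deriv_powerTransform hs hfs
  have heuler : HasDerivAt (fun x ↦ a • f x + (b * x) • deriv f x)
      (a • deriv f (r ^ b) + ((b * r ^ b) • deriv (deriv f) (r ^ b) + b • deriv f (r ^ b)))
      (r ^ b) :=
    (hf.self_of_nhds.hasDerivAt.const_smul a).add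
      ((hasDerivAt_const_mul b).smul hf'.hasDerivAt)
  refine ((hasDerivAt_powerTransform hr heuler).congr_of_eventuallyEq hderiv).congr_deriv ?_
  rw [sub_sub, one_add_one_eq_two]
  module

theorem radialLaplacian_powerTransform (d : ℝ) (hr : 0 < r)
    (hf : ∀ᶠ x in 𝓝 (r ^ b), DifferentiableAt ℝ f x)
    (hf' : DifferentiableAt ℝ (deriv f) (r ^ b)) :
    radialLaplacian d (powerTransform a b f) r =
      r ^ (a - 2) • ((b * r ^ b) ^ 2 • deriv (deriv f) (r ^ b)
        + (b * (2 * a + b + d - 2) * r ^ b) • deriv f (r ^ b)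
        + (a * (a + d - 2)) • f (r ^ b)) := by
  have hpow : (d - 1) / r * r ^ (a - 1) = (d - 1) * r ^ (a - 2) := by
    rw [show a - 2 = a - 1 - 1 by ring, Real.rpow_sub_one hr.ne' (a - 1)]
    ring
  rw [radialLaplacian, (hasDerivAt_deriv_powerTransform hr hf hf').deriv,
    deriv_powerTransform hr hf.self_of_nhds, powerTransform, smul_smul, hpow]
  module

end PowerTransform

theorem radialLaplacian_powerTransform_eq_sq {d β r : ℝ} {f : ℝ → ℝ}
    (hβ : β ^ 2 + (6 - d) * β = 8 - 2 * d) (hr : 0 < r)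
    (hf : ∀ᶠ x in 𝓝 (r ^ (-β)), DifferentiableAt ℝ f x)
    (hf' : DifferentiableAt ℝ (deriv f) (r ^ (-β)))
    (hODE : β ^ 2 * (r ^ (-β)) ^ 2 * deriv (deriv f) (r ^ (-β))
      + (8 - 2 * d) * (r ^ (-β) * deriv f (r ^ (-β)) + f (r ^ (-β))) = f (r ^ (-β)) ^ 2) :
    radialLaplacian d (powerTransform (-2) (-β) f) r = powerTransform (-2) (-β) f r ^ 2 := by
  have hpow : r ^ ((-2 : ℝ) - 2) = (r ^ (-2 : ℝ)) ^ 2 := by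
    rw [← Real.rpow_mul_natCast hr.le]
    norm_num
  rw [radialLaplacian_powerTransform d hr hf hf', hpow]
  simp only [powerTransform, smul_eq_mul, mul_pow]
  linear_combination (r ^ (-2 : ℝ)) ^ 2 * (hODE + r ^ (-β) * deriv f (r ^ (-β)) * hβ)

/-- The exponent `β(d)` of the low-dimensional corrections, the larger root of
`β² + (6 - d)β = 8 - 2d`, for real `d` with nonnegative discriminant `d² - 20d + 68`. -/
noncomputable def lowDimExponent (d : ℝ) : ℝ :=
  (d - 6 + √(d ^ 2 - 20 * d + 68)) / 2

theorem lowDimExponent_pos {d : ℝ} (hd : d < 4) : 0 < lowDimExponent d := by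
  have hsqrt : 6 - d < √(d ^ 2 - 20 * d + 68) := Real.lt_sqrt_of_sq_lt (by linarith)
  rw [lowDimExponent]
  linarith

theorem lowDimExponent_sq_add {d : ℝ} (hd : 0 ≤ d ^ 2 - 20 * d + 68) :
    lowDimExponent d ^ 2 + (6 - d) * lowDimExponent d = 8 - 2 * d := by
  rw [lowDimExponent]
  linear_combination Real.sq_sqrt hd / 4

theorem beta_change_of_variables_general (d : ℝ) (hd : d < 4)
    (β : ℝ)
    (hβ : β = (d - 6 + √(d ^ 2 - 20 * d + 68)) / 2)
    (f : ℝ → ℝ)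
    (hf1 : ∀ x ∈ Ioi (0 : ℝ), DifferentiableAt ℝ f x)
    (hf2 : ∀ x ∈ Ioi (0 : ℝ), DifferentiableAt ℝ (deriv f) x)
    (hODE : ∀ x ∈ Ioi (0 : ℝ),
      β ^ 2 * x ^ 2 * deriv (deriv f) x
        + (8 - 2 * d) * (x * deriv f x + f x) = (f x) ^ 2)
    (w : ℝ → ℝ)
    (hw : ∀ r : ℝ, w r = r ^ (-2 : ℝ) * f (r ^ (-β))) :
    0 < β ∧
    β ^ 2 + (6 - d) * β = 8 - 2 * d ∧
    (∀ r ∈ Ioi (0 : ℝ), DifferentiableAt ℝ w r) ∧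
    (∀ r ∈ Ioi (0 : ℝ), DifferentiableAt ℝ (deriv w) r) ∧
    (∀ r ∈ Ioi (0 : ℝ),
      deriv (deriv w) r + (d - 1) / r * deriv w r = (w r) ^ 2) := by
  obtain rfl : β = lowDimExponent d := hβ
  obtain rfl : w = powerTransform (-2) (-lowDimExponent d) f := funext hw
  have hquad : lowDimExponent d ^ 2 + (6 - d) * lowDimExponent d = 8 - 2 * d :=
    lowDimExponent_sq_add (by nlinarith)
  have hx {r : ℝ} (hr : 0 < r) : 0 < r ^ (-lowDimExponent d) := Real.rpow_pos_of_pos hr _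
  have hf {r : ℝ} (hr : 0 < r) : ∀ᶠ x in 𝓝 (r ^ (-lowDimExponent d)), DifferentiableAt ℝ f x :=
    (lt_mem_nhds (hx hr)).mono hf1
  refine ⟨lowDimExponent_pos hd, hquad, fun r hr ↦ ?_, fun r hr ↦ ?_, fun r hr ↦ ?_⟩
  · exact (hasDerivAt_powerTransform hr (hf1 _ (hx hr)).hasDerivAt).differentiableAt
  · exact (hasDerivAt_deriv_powerTransform hr (hf hr) (hf2 _ (hx hr))).differentiableAt
  · exact radialLaplacian_powerTransform_eq_sq hquad hr (hf hr) (hf2 _ (hx hr)) (hODE _ (hx hr))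

/-- The low-dimensional exponent `β = (d - 6 + √(d² - 20d + 68))/2` for
`d ∈ {1,2,3}` is positive and satisfies `β² + (6-d)β = 8 - 2d`; moreover the
change of variables `w(r) = r^{-2} f(r^{-β})` transforms any solution of
`β² x² f'' + (8-2d)(x f' + f) = f²` on `(0,∞)` into a solution of the radial
equation `w'' + ((d-1)/r) w' = w²` on `(0,∞)`. -/
theorem beta_change_of_variables (d : ℕ) (hd : d = 1 ∨ d = 2 ∨ d = 3)
    (β : ℝ)
    (hβ : β = ((d : ℝ) - 6 + Real.sqrt ((d : ℝ) ^ 2 - 20 * (d : ℝ) + 68)) / 2)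
    (f : ℝ → ℝ)
    (hf1 : ∀ x ∈ Set.Ioi (0 : ℝ), DifferentiableAt ℝ f x)
    (hf2 : ∀ x ∈ Set.Ioi (0 : ℝ), DifferentiableAt ℝ (deriv f) x)
    (hODE : ∀ x ∈ Set.Ioi (0 : ℝ),
      β ^ 2 * x ^ 2 * deriv (deriv f) x
        + (8 - 2 * (d : ℝ)) * (x * deriv f x + f x) = (f x) ^ 2)
    (w : ℝ → ℝ)
    (hw : ∀ r : ℝ, w r = r ^ (-2 : ℝ) * f (r ^ (-β))) :
    0 < β ∧
    β ^ 2 + (6 - (d : ℝ)) * β = 8 - 2 * (d : ℝ) ∧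
    (∀ r ∈ Set.Ioi (0 : ℝ), DifferentiableAt ℝ w r) ∧
    (∀ r ∈ Set.Ioi (0 : ℝ), DifferentiableAt ℝ (deriv w) r) ∧
    (∀ r ∈ Set.Ioi (0 : ℝ),
      deriv (deriv w) r + ((d : ℝ) - 1) / r * deriv w r = (w r) ^ 2) := by
  have hd4 : (d : ℝ) < 4 := by rcases hd with rfl | rfl | rfl <;> norm_num
  exact beta_change_of_variables_general d hd4 β hβ f hf1 hf2 hODE w hw
end
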